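/- Let h : ℝ → [0,∞] be 2π-periodic with h(z) = |z|^{−1/2} for z ∈ (−π,π] \ {0}, and let the input be a centered stationary Gaussian process {X_{j,k}} with absolutely continuous spectral measure of density f(x,y) := (2π)^{−1} h(x+y) on [−π,π]². Then μ_f = WSL(8√π), the Wigner semicircle law with variance 8√π. In particular, ∫_{[−π,π]²} f(x,y)² dx dy = ∞, showing that finiteness of ‖f‖_m is not necessary for finiteness of the (2m)-th moment of μ_f. -/

import Mathlib

open MeasureTheory ProbabilityTheory Filter Real

noncomputable section

/-- The square `(-π, π]²` on which the spectral measure lives. -/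
def specBox : Set (ℝ × ℝ) := Set.Ioc (-π) π ×ˢ Set.Ioc (-π) π

/-- `(1/N) ∑_j g(λ_j(A))`, the integral of `g` against the empirical spectral
distribution of a symmetric `N × N` real matrix `A` (junk value `0` if `A` is
not symmetric). -/
def esdEval {N : ℕ} (A : Matrix (Fin N) (Fin N) ℝ) (g : ℝ → ℝ) : ℝ :=
  if hA : A.IsHermitian then (N : ℝ)⁻¹ * ∑ j, g (hA.eigenvalues j) else 0

/-- The (random) empirical spectral distributions of `A N` converge weakly in
probability to the probability measure `μ`: for every bounded continuous `g`,
`∫ g d(ESD(A N)) → ∫ g dμ` in probability. -/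
def ESDTendstoInProb {Ω : Type*} [MeasurableSpace Ω] (P : Measure Ω)
    (A : (N : ℕ) → Ω → Matrix (Fin N) (Fin N) ℝ) (μ : Measure ℝ) : Prop :=
  ∀ g : ℝ → ℝ, Continuous g → (∃ C, ∀ x, |g x| ≤ C) →
    ∀ ε > 0, Tendsto (fun N => P {ω | ε ≤ |esdEval (A N ω) g - ∫ x, g x ∂μ|})
      atTop (nhds 0)

/-- The symmetric matrix `W_N/√N`, where `W_N(i,j) = X_{i,j} + X_{j,i}`,
`1 ≤ i,j ≤ N`. -/
def scaledW {Ω : Type*} (X : ℤ → ℤ → Ω → ℝ) (N : ℕ) (ω : Ω) :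
    Matrix (Fin N) (Fin N) ℝ :=
  fun i j => (Real.sqrt N)⁻¹ *
    (X ((i : ℕ) + 1) ((j : ℕ) + 1) ω + X ((j : ℕ) + 1) ((i : ℕ) + 1) ω)

/-- A centered stationary Gaussian process indexed by `ℤ²` with positive
variance: every finite real linear combination is a centered Gaussian random
variable, and second moments are shift invariant. -/
structure StatGauss {Ω : Type*} [MeasurableSpace Ω] (P : Measure Ω)
    (X : ℤ → ℤ → Ω → ℝ) : Prop where
  meas : ∀ j k, Measurable (X j k)
  gauss : ∀ c : (ℤ × ℤ) →₀ ℝ, ∃ v : NNReal,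
    P.map (fun ω => ∑ p ∈ c.support, c p * X p.1 p.2 ω) = gaussianReal 0 v
  var_pos : 0 < ∫ ω, (X 0 0 ω) ^ 2 ∂P
  stat : ∀ j k u v : ℤ,
    ∫ ω, X j k ω * X (j + u) (k + v) ω ∂P = ∫ ω, X 0 0 ω * X u v ω ∂P

/-- The process `X` has absolutely continuous spectral measure with density
`h` on `(-π,π]²`: `E[X_{0,0} X_{u,v}] = ∫∫ e^{i(ux+vy)} h(x,y) dx dy`. -/
def HasSpecDensity {Ω : Type*} [MeasurableSpace Ω] (P : Measure Ω)
    (X : ℤ → ℤ → Ω → ℝ) (h : ℝ × ℝ → ℝ) : Prop :=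
  ∀ u v : ℤ,
    (∫ q in specBox,
        Complex.exp (Complex.I * ((u * q.1 + v * q.2 : ℝ) : ℂ)) * ((h q : ℝ) : ℂ))
      = ((∫ ω, X 0 0 ω * X u v ω ∂P : ℝ) : ℂ)

/-- The Wigner semicircle law with variance `γ`: the measure on `ℝ` with
density `(2π√γ)⁻¹ √(4 - x²/γ) 1(|x| ≤ 2√γ)`. -/
def WSL (γ : ℝ) : Measure ℝ :=
  volume.withDensity fun x => ENNReal.ofReal
    (if |x| ≤ 2 * Real.sqrt γ then
      (2 * π * Real.sqrt γ)⁻¹ * Real.sqrt (4 - x ^ 2 / γ) else 0)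

/-!
If the spectral density of the field is a function of `x + y`, the covariance `E[X_{0,0} X_{u,v}]`
vanishes off `u = v`, and its diagonal values `c_v` are Fourier coefficients of an integrable
function, so that `c_v → 0` by Riemann–Lebesgue. Let `G` be the resolvent of `W_N/√N` at `z` and
`T_u = N⁻¹ tr (S_u G)`, where `S_u` is the truncated shift by `u`. Gaussian integration by parts
gives the Schwinger–Dyson equations `z T_u = δ_{u,0} + 2 ∑_v c_v T_v T_{u-v}`, up to errors that
vanish in the mean when paired with `conj T_u`. The Toeplitz form of `T` is bounded by
`‖G‖ ≤ 1 / Im z`, so for `Im z` large the nonlinear term is too weak to sustain any mass at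
`u ≠ 0`: there `T_u` dies out, and at `u = 0` the quadratic equation of the semicircle law of
variance `2 c_0` is left.
The Stieltjes transform on one horizontal line determines a finite measure, by Fourier inversion.

For `h = |·|^{-1/2}` one has `c_0 = 4 √π`, and integrating `h(x + y)²` along `x + y = t` leaves a
multiple of `∫ dt / t = ∞`.
-/

open scoped ComplexConjugate Matrix Matrix.Norms.L2Operator

section Resolvent

variable {n : Type*} [Fintype n] [DecidableEq n]

theorem norm_entry_le_l2_opNorm (A : Matrix n n ℂ) (i j : n) : ‖A i j‖ ≤ ‖A‖ := by
  have hcol : ‖WithLp.toLp 2 (A *ᵥ Pi.single j 1)‖ ≤ ‖A‖ := by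
    simpa using Matrix.l2_opNorm_mulVec A (EuclideanSpace.single j (1 : ℂ))
  simpa using (PiLp.norm_apply_le (WithLp.toLp 2 (A *ᵥ Pi.single j 1)) i).trans hcol

theorem norm_trace_le (A : Matrix n n ℂ) : ‖A.trace‖ ≤ Fintype.card n * ‖A‖ := by
  calc ‖A.trace‖ ≤ ∑ i, ‖A i i‖ := norm_sum_le _ _
    _ ≤ ∑ _i : n, ‖A‖ := Finset.sum_le_sum fun i _ => norm_entry_le_l2_opNorm A i i
    _ = Fintype.card n * ‖A‖ := by simp

theorem norm_trace_mul_le {A B : Matrix n n ℂ} {a b : ℝ}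
    (hA : ‖A‖ ≤ a) (hB : ‖B‖ ≤ b) : ‖(A * B).trace‖ ≤ Fintype.card n * (a * b) :=
  (norm_trace_le _).trans <| mul_le_mul_of_nonneg_left ((Matrix.l2_opNorm_mul _ _).trans
    (mul_le_mul hA hB (norm_nonneg _) ((norm_nonneg _).trans hA))) (Nat.cast_nonneg _)

theorem norm_dotProduct_mulVec_le (A : Matrix n n ℂ) (x y : n → ℂ) :
    ‖x ⬝ᵥ A *ᵥ y‖ ≤ ‖A‖ / 2 * (∑ j, ‖x j‖ ^ 2 + ∑ j, ‖y j‖ ^ 2) := by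
  set x' : EuclideanSpace ℂ (n) := WithLp.toLp 2 (star x)
  set y' : EuclideanSpace ℂ (n) := WithLp.toLp 2 y
  have hx : ‖x'‖ ^ 2 = ∑ j, ‖x j‖ ^ 2 := by simp [x', EuclideanSpace.norm_sq_eq]
  have hy : ‖y'‖ ^ 2 = ∑ j, ‖y j‖ ^ 2 := by simp [y', EuclideanSpace.norm_sq_eq]
  have hinner : x ⬝ᵥ A *ᵥ y = inner ℂ x' (WithLp.toLp 2 (A *ᵥ y)) := by
    simp [x', EuclideanSpace.inner_eq_star_dotProduct, dotProduct_comm]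
  calc ‖x ⬝ᵥ A *ᵥ y‖ ≤ ‖x'‖ * (‖A‖ * ‖y'‖) :=
        hinner ▸ (norm_inner_le_norm _ _).trans
          (mul_le_mul_of_nonneg_left (Matrix.l2_opNorm_mulVec A y') (norm_nonneg _))
    _ ≤ ‖A‖ / 2 * (‖x'‖ ^ 2 + ‖y'‖ ^ 2) := by
        nlinarith [mul_nonneg (norm_nonneg A) (sq_nonneg (‖x'‖ - ‖y'‖))]
    _ = _ := by rw [hx, hy]

/-- The resolvent `(z - A)⁻¹` of a real square matrix at a complex spectral parameter. -/
def realResolvent (A : Matrix n n ℝ) (z : ℂ) : Matrix n n ℂ :=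
  (z • 1 - A.map Complex.ofReal)⁻¹

variable {A : Matrix n n ℝ} {z : ℂ}

theorem realResolvent_eq_conj_diagonal (hA : A.IsHermitian) (hz : z.im ≠ 0) :
    ∃ U ∈ unitary (Matrix n n ℂ),
      (z • 1 - A.map Complex.ofReal) *
          (U * Matrix.diagonal (fun i => (z - hA.eigenvalues i)⁻¹) * star U) = 1 ∧
        realResolvent A z = U * Matrix.diagonal (fun i => (z - hA.eigenvalues i)⁻¹) * star U := by
  set U : Matrix n n ℂ := (hA.eigenvectorUnitary : Matrix n n ℝ).map Complex.ofRealHom with hU_def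
  have hstar : star U = (star (hA.eigenvectorUnitary : Matrix n n ℝ)).map Complex.ofRealHom := by
    ext i j
    simp [hU_def, Matrix.star_apply]
  have hU_left : star U * U = 1 := by
    rw [hstar, hU_def, ← Matrix.map_mul, Unitary.coe_star_mul_self]
    simp
  have hU_right : U * star U = 1 := by
    rw [hstar, hU_def, ← Matrix.map_mul, Unitary.mul_star_self_of_mem hA.eigenvectorUnitary.2]
    simp
  have hA_eq : A.map Complex.ofRealHom =
      U * Matrix.diagonal (fun i => (hA.eigenvalues i : ℂ)) * star U := by
    have h := congrArg (Matrix.map · Complex.ofRealHom) hA.spectral_theorem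
    rw [hstar]
    simpa [Unitary.conjStarAlgAut_apply, Matrix.map_mul, Function.comp_def] using h
  have hne (i : n) : z - hA.eigenvalues i ≠ 0 := fun h => hz (by simpa using congrArg Complex.im h)
  have hshift : z • 1 - A.map Complex.ofReal =
      U * Matrix.diagonal (fun i => z - hA.eigenvalues i) * star U := by
    have hz_eq : U * Matrix.diagonal (fun _ => z) * star U = z • 1 := by
      rw [← Matrix.smul_one_eq_diagonal, mul_smul_comm, mul_one, smul_mul_assoc, hU_right]
    rw [← hz_eq]
    change _ - A.map Complex.ofRealHom = _
    rw [hA_eq, ← sub_mul, ← mul_sub, Matrix.diagonal_sub]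
  have hinv : (z • 1 - A.map Complex.ofReal) *
      (U * Matrix.diagonal (fun i => (z - hA.eigenvalues i)⁻¹) * star U) = 1 := by
    rw [hshift]
    calc _ = U * Matrix.diagonal (fun i => z - hA.eigenvalues i) * (star U * U) *
          Matrix.diagonal (fun i => (z - hA.eigenvalues i)⁻¹) * star U := by
            simp only [Matrix.mul_assoc]
      _ = 1 := by
          simp [hU_left, hU_right, Matrix.mul_assoc, hne]
  exact ⟨U, Unitary.mem_iff.2 ⟨hU_left, hU_right⟩, hinv, Matrix.inv_eq_right_inv hinv⟩

theorem sub_mul_realResolvent (hA : A.IsHermitian) (hz : z.im ≠ 0) :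
    (z • 1 - A.map Complex.ofReal) * realResolvent A z = 1 := by
  obtain ⟨U, -, hinv, hres⟩ := realResolvent_eq_conj_diagonal hA hz
  rw [hres, hinv]

theorem map_mul_realResolvent (hA : A.IsHermitian) (hz : z.im ≠ 0) :
    A.map Complex.ofReal * realResolvent A z = z • realResolvent A z - 1 := by
  rw [← sub_mul_realResolvent hA hz, sub_mul, smul_mul_assoc, one_mul, sub_sub_cancel]

theorem trace_realResolvent (hA : A.IsHermitian) (hz : z.im ≠ 0) :
    (realResolvent A z).trace = ∑ i, (z - hA.eigenvalues i)⁻¹ := by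
  obtain ⟨U, hU, -, hres⟩ := realResolvent_eq_conj_diagonal hA hz
  rw [hres, Matrix.trace_mul_comm, ← Matrix.mul_assoc, (Unitary.mem_iff.1 hU).1, one_mul,
    Matrix.trace_diagonal]

theorem norm_realResolvent_le (hA : A.IsHermitian) (hz : 0 < z.im) :
    ‖realResolvent A z‖ ≤ z.im⁻¹ := by
  obtain ⟨U, hU, -, hres⟩ := realResolvent_eq_conj_diagonal hA hz.ne'
  rw [hres, CStarRing.norm_mul_mem_unitary _ (Unitary.star_mem hU),
    CStarRing.norm_mem_unitary_mul _ hU, Matrix.l2_opNorm_diagonal,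
    pi_norm_le_iff_of_nonneg (inv_nonneg.2 hz.le)]
  intro i
  rw [norm_inv]
  have him : |(z - hA.eigenvalues i).im| = z.im := by simp [abs_of_pos hz]
  exact inv_anti₀ hz (him ▸ Complex.abs_im_le_norm _)

theorem transpose_realResolvent (hA : A.IsHermitian) :
    (realResolvent A z)ᵀ = realResolvent A z := by
  have hAt : Aᵀ = A := hA
  rw [realResolvent, Matrix.transpose_nonsing_inv, Matrix.transpose_sub, Matrix.transpose_smul,
    Matrix.transpose_one, ← Matrix.transpose_map, hAt]

theorem isUnit_sub_map (hA : A.IsHermitian) (hz : z.im ≠ 0) :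
    IsUnit (z • 1 - A.map Complex.ofReal) :=
  .of_mul_eq_one _ (sub_mul_realResolvent hA hz)

theorem hasDerivAt_realResolvent_add_smul (hA : A.IsHermitian) (hz : z.im ≠ 0) (K : Matrix n n ℝ) :
    HasDerivAt (fun t : ℝ => realResolvent (A + t • K) z)
      (realResolvent A z * K.map Complex.ofReal * realResolvent A z) 0 := by
  obtain ⟨B, hB⟩ := isUnit_sub_map hA hz
  have hline : HasDerivAt (fun t : ℝ => (B : Matrix n n ℂ) - t • K.map Complex.ofReal)
      (-K.map Complex.ofReal) 0 := by
    simpa using ((hasDerivAt_id (0 : ℝ)).smul_const (K.map Complex.ofReal)).const_sub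
      (B : Matrix n n ℂ)
  have hres : realResolvent A z = ↑B⁻¹ := by
    rw [realResolvent, ← hB, Matrix.nonsing_inv_eq_ringInverse, Ring.inverse_unit]
  have h := (hasFDerivAt_ringInverse (𝕜 := ℝ) B).comp_hasDerivAt_of_eq (0 : ℝ) hline (by simp)
  rw [hres]
  refine (h.congr_deriv (by simp)).congr_of_eventuallyEq (.of_forall fun t => ?_)
  simp only [realResolvent, Function.comp_apply, Matrix.nonsing_inv_eq_ringInverse, hB]
  congr 1
  ext i j
  simp
  ring

theorem continuous_realResolvent_comp {T : Type*} [TopologicalSpace T] {A : T → Matrix n n ℝ}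
    (hA : ∀ t, (A t).IsHermitian) (hcont : Continuous A) (hz : z.im ≠ 0) :
    Continuous fun t => realResolvent (A t) z := by
  simp only [realResolvent, Matrix.nonsing_inv_eq_ringInverse]
  refine continuous_iff_continuousAt.2 fun t => ?_
  obtain ⟨B, hB⟩ := isUnit_sub_map (hA t) hz
  refine ContinuousAt.comp (g := Ring.inverse) (hB ▸ NormedRing.inverse_continuousAt B) ?_
  have : Continuous fun t => z • (1 : Matrix n n ℂ) - (A t).map Complex.ofReal :=
    continuous_const.sub (hcont.matrix_map Complex.continuous_ofReal)
  exact this.continuousAt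

end Resolvent

section ShiftMatrix

variable {N : ℕ}

/-- The `N × N` truncation of the shift by `u` on `ℤ`: ones on the diagonal `j - k = u`. -/
def shiftMatrix (N : ℕ) (u : ℤ) : Matrix (Fin N) (Fin N) ℂ :=
  .of fun j k => if ((j : ℕ) : ℤ) = (k : ℕ) + u then 1 else 0

theorem shiftMatrix_zero : shiftMatrix N 0 = 1 := by
  ext j k
  simp [shiftMatrix, Matrix.one_apply, Fin.ext_iff]

theorem transpose_shiftMatrix (u : ℤ) : (shiftMatrix N u)ᵀ = shiftMatrix N (-u) := by
  ext j k
  simp only [shiftMatrix, Matrix.transpose_apply, Matrix.of_apply]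
  congr 1
  exact propext ⟨fun h => by omega, fun h => by omega⟩

theorem conjTranspose_shiftMatrix (u : ℤ) : (shiftMatrix N u)ᴴ = shiftMatrix N (-u) := by
  rw [← transpose_shiftMatrix, Matrix.conjTranspose]
  ext j k
  simp [shiftMatrix, apply_ite]

theorem shiftMatrix_mul_shiftMatrix (u v : ℤ) :
    shiftMatrix N u * shiftMatrix N v =
      Matrix.diagonal (fun j : Fin N => if 0 ≤ (j : ℤ) - u ∧ (j : ℤ) - u < N then 1 else 0) *
        shiftMatrix N (u + v) := by
  ext j l
  rw [Matrix.mul_apply, Matrix.diagonal_mul]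
  simp only [shiftMatrix, Matrix.of_apply, mul_ite, mul_one, mul_zero, ← ite_and]
  by_cases hj : 0 ≤ (j : ℤ) - u ∧ (j : ℤ) - u < N
  · obtain ⟨i, hi⟩ := Int.eq_ofNat_of_zero_le hj.1
    rw [Finset.sum_eq_single ⟨i, by omega⟩ (fun k _ hk => if_neg fun h => hk (Fin.ext ?_))
      (fun h => absurd (Finset.mem_univ _) h)]
    · exact if_congr ⟨fun h => ⟨by omega, hj⟩, fun h => by constructor <;> simp <;> omega⟩ rfl rfl
    · simp
      omega
  · rw [Finset.sum_eq_zero fun k _ => if_neg fun h => hj (by omega), if_neg fun h => hj h.2]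

theorem norm_shiftMatrix_le (u : ℤ) : ‖shiftMatrix N u‖ ≤ 1 := by
  have hsq : ‖shiftMatrix N u‖ * ‖shiftMatrix N u‖ ≤ 1 := by
    rw [← Matrix.l2_opNorm_conjTranspose_mul_self, conjTranspose_shiftMatrix,
      shiftMatrix_mul_shiftMatrix, neg_add_cancel, shiftMatrix_zero, mul_one,
      Matrix.l2_opNorm_diagonal, pi_norm_le_iff_of_nonneg zero_le_one]
    intro j
    split_ifs <;> simp
  nlinarith [norm_nonneg (shiftMatrix N u)]

theorem norm_shiftMatrix_mul_le (u : ℤ) (A : Matrix (Fin N) (Fin N) ℂ) :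
    ‖shiftMatrix N u * A‖ ≤ ‖A‖ :=
  (Matrix.l2_opNorm_mul _ _).trans
    (mul_le_of_le_one_left (norm_nonneg A) (norm_shiftMatrix_le u))

theorem norm_mul_shiftMatrix_le (u : ℤ) (A : Matrix (Fin N) (Fin N) ℂ) :
    ‖A * shiftMatrix N u‖ ≤ ‖A‖ :=
  (Matrix.l2_opNorm_mul _ _).trans
    (mul_le_of_le_one_right (norm_nonneg A) (norm_shiftMatrix_le u))

theorem card_filter_shift_notMem_le (N : ℕ) (u : ℤ) :
    (Finset.univ.filter fun j : Fin N => ¬(0 ≤ (j : ℤ) - u ∧ (j : ℤ) - u < N)).card ≤ u.natAbs := by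
  rw [← Finset.card_range u.natAbs]
  rcases le_total 0 u with hu | hu
  · refine Finset.card_le_card_of_injOn (fun j => (j : ℕ)) (fun j hj => ?_) Fin.val_injective.injOn
    simp only [Finset.coe_filter, Finset.mem_univ, true_and, Set.mem_ofPred_eq] at hj
    simp only [Finset.coe_range, Set.mem_Iio]
    omega
  · refine Finset.card_le_card_of_injOn (fun j => (j.rev : ℕ)) (fun j hj => ?_)
      (Fin.val_injective.comp Fin.rev_injective).injOn
    simp only [Finset.coe_filter, Finset.mem_univ, true_and, Set.mem_ofPred_eq] at hj
    simp only [Finset.coe_range, Set.mem_Iio, Fin.val_rev]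
    omega

theorem norm_trace_shiftMatrix_mul_shiftMatrix_mul_sub_le (u v : ℤ)
    (A : Matrix (Fin N) (Fin N) ℂ) :
    ‖(shiftMatrix N u * shiftMatrix N v * A).trace - (shiftMatrix N (u + v) * A).trace‖
      ≤ |(u : ℝ)| * ‖A‖ := by
  set B := shiftMatrix N (u + v) * A
  have hB : ‖B‖ ≤ ‖A‖ := norm_shiftMatrix_mul_le _ _
  set inRange : Fin N → Prop := fun j => 0 ≤ (j : ℤ) - u ∧ (j : ℤ) - u < N
  have hdiff : (shiftMatrix N u * shiftMatrix N v * A).trace - B.trace =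
      -∑ j with ¬inRange j, B j j := by
    rw [shiftMatrix_mul_shiftMatrix, Matrix.mul_assoc]
    simp only [Matrix.trace, Matrix.diag, Matrix.diagonal_mul, ite_mul, one_mul, zero_mul]
    rw [← Finset.sum_filter, ← Finset.sum_filter_add_sum_filter_not Finset.univ inRange]
    simp [inRange, B]
  rw [hdiff, norm_neg]
  calc ‖∑ j with ¬inRange j, B j j‖ ≤ ∑ j with ¬inRange j, ‖A‖ :=
        norm_sum_le_of_le _ fun j _ => (norm_entry_le_l2_opNorm B j j).trans hB
    _ = (Finset.univ.filter fun j => ¬inRange j).card * ‖A‖ := by simp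
    _ ≤ |(u : ℝ)| * ‖A‖ := by
        have := card_filter_shift_notMem_le N u
        rw [← Int.cast_abs, Int.abs_eq_natAbs, Int.cast_natCast]
        gcongr

/-- The normalized trace `N⁻¹ tr(S_u A)`, the average of `A` along one of its diagonals. -/
def shiftTrace (A : Matrix (Fin N) (Fin N) ℂ) (u : ℤ) : ℂ :=
  (N : ℂ)⁻¹ * (shiftMatrix N u * A).trace

theorem norm_shiftTrace_le (A : Matrix (Fin N) (Fin N) ℂ) (u : ℤ) : ‖shiftTrace A u‖ ≤ ‖A‖ := by
  rw [shiftTrace, norm_mul, norm_inv, Complex.norm_natCast]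
  refine inv_mul_le_of_le_mul₀ (Nat.cast_nonneg _) (norm_nonneg _) ?_
  simpa using (norm_trace_le (shiftMatrix N u * A)).trans
    (mul_le_mul_of_nonneg_left (norm_shiftMatrix_mul_le u A) (Nat.cast_nonneg _))

theorem shiftTrace_neg {A : Matrix (Fin N) (Fin N) ℂ} (hA : Aᵀ = A) (u : ℤ) :
    shiftTrace A (-u) = shiftTrace A u := by
  rw [shiftTrace, ← transpose_shiftMatrix, ← hA, ← Matrix.transpose_mul, Matrix.trace_transpose,
    Matrix.trace_mul_comm, hA, shiftTrace]

theorem shiftTrace_one [NeZero N] (u : ℤ) :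
    shiftTrace (1 : Matrix (Fin N) (Fin N) ℂ) u = if u = 0 then 1 else 0 := by
  simp only [shiftTrace, mul_one, Matrix.trace, Matrix.diag, shiftMatrix, Matrix.of_apply,
    left_eq_add]
  split_ifs <;> simp

theorem shiftTrace_eq_sum (A : Matrix (Fin N) (Fin N) ℂ) (u : ℤ) :
    shiftTrace A u = (N : ℂ)⁻¹ * ∑ k : Fin N, ∑ j : Fin N,
      if (k : ℤ) = j + u then A j k else 0 := by
  simp [shiftTrace, Matrix.trace, Matrix.mul_apply, shiftMatrix]

theorem sum_sum_ite_eq_tsum_indicator (I J : Finset ℤ) (a b : ℤ → ℂ) (j k : ℤ) :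
    ∑ v ∈ I, ∑ u ∈ J, (if k = j + (u - v) then a v * b u else 0) =
      ∑' s : ℤ, (I : Set ℤ).indicator a (s + j) * (J : Set ℤ).indicator b (s + k) := by
  calc _ = ∑ v ∈ I, (I : Set ℤ).indicator a v * (J : Set ℤ).indicator b (v + (k - j)) := by
        refine Finset.sum_congr rfl fun v hv => ?_
        have hcond (u : ℤ) : k = j + (u - v) ↔ v + (k - j) = u := by omega
        simp [hcond, Set.indicator_apply, hv]
    _ = ∑' v, (I : Set ℤ).indicator a v * (J : Set ℤ).indicator b (v + (k - j)) :=
        (tsum_eq_sum fun v hv => by simp [Set.indicator_apply, hv]).symm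
    _ = _ := by
        rw [← (Equiv.addRight j).tsum_eq]
        simp [add_assoc]

theorem hasSum_sum_sq_indicator_shift (I : Finset ℤ) (a : ℤ → ℂ) :
    HasSum (fun s : ℤ => ∑ j : Fin N, ‖(I : Set ℤ).indicator a (s + j)‖ ^ 2)
      (N * ∑ v ∈ I, ‖a v‖ ^ 2) := by
  have hI : HasSum (fun s => ‖(I : Set ℤ).indicator a s‖ ^ 2) (∑ v ∈ I, ‖a v‖ ^ 2) := by
    have h : ∑ v ∈ I, ‖a v‖ ^ 2 = ∑ v ∈ I, ‖(I : Set ℤ).indicator a v‖ ^ 2 :=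
      Finset.sum_congr rfl fun v hv => by simp [hv]
    rw [h]
    exact hasSum_sum_of_ne_finset_zero fun v hv => by simp [hv]
  have h := hasSum_sum (s := (Finset.univ : Finset (Fin N))) fun j _ =>
    (Equiv.addRight ((j : ℕ) : ℤ)).hasSum_iff.2 hI
  simpa using h

/-- Sliding the window `{0, …, N - 1}` along `ℤ` and averaging the bilinear form of `A` over all
positions turns it into a Toeplitz form. -/
theorem sum_sum_mul_shiftTrace_mul_eq_tsum (A : Matrix (Fin N) (Fin N) ℂ) (I J : Finset ℤ)
    (a b : ℤ → ℂ) :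
    ∑ v ∈ I, ∑ u ∈ J, a v * shiftTrace A (u - v) * b u = (N : ℂ)⁻¹ * ∑' s : ℤ,
      (fun j : Fin N => (I : Set ℤ).indicator a (s + j)) ⬝ᵥ
        A *ᵥ fun k => (J : Set ℤ).indicator b (s + k) := by
  set x : ℤ → Fin N → ℂ := fun s j => (I : Set ℤ).indicator a (s + j)
  set y : ℤ → Fin N → ℂ := fun s k => (J : Set ℤ).indicator b (s + k)
  have hsummable (j k : Fin N) : Summable fun s => A j k * (x s j * y s k) := by
    refine Summable.mul_left _ (summable_of_hasFiniteSupport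
      (((I.image fun v => v - (j : ℤ)).finite_toSet).subset fun s hs => ?_))
    simp only [Function.mem_support, x, Set.indicator_apply] at hs
    simp only [Finset.coe_image, Set.mem_image]
    exact ⟨s + j, by by_contra h; simp [h] at hs, by ring⟩
  calc _ = (N : ℂ)⁻¹ * ∑ k : Fin N, ∑ j : Fin N, A j k *
        ∑ v ∈ I, ∑ u ∈ J, (if (k : ℤ) = j + (u - v) then a v * b u else 0) := by
        simp only [shiftTrace_eq_sum, Finset.mul_sum, Finset.sum_mul]
        simp_rw [Finset.sum_comm (s := J), Finset.sum_comm (s := I)]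
        refine Finset.sum_congr rfl fun k _ => Finset.sum_congr rfl fun j _ =>
          Finset.sum_congr rfl fun v _ => Finset.sum_congr rfl fun u _ => ?_
        split_ifs <;> ring
    _ = (N : ℂ)⁻¹ * ∑ k : Fin N, ∑ j : Fin N, ∑' s, A j k * (x s j * y s k) := by
        simp only [sum_sum_ite_eq_tsum_indicator, tsum_mul_left, x, y]
    _ = _ := by
        simp_rw [← Summable.tsum_finsetSum fun j _ => hsummable j _]
        rw [← Summable.tsum_finsetSum fun k _ => summable_sum fun j _ => hsummable j k]
        congr 2
        funext s
        rw [Finset.sum_comm]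
        simp only [dotProduct, Matrix.mulVec, Finset.mul_sum]
        exact Finset.sum_congr rfl fun j _ => Finset.sum_congr rfl fun k _ => by ring

theorem norm_toeplitz_form_le (A : Matrix (Fin N) (Fin N) ℂ) (I J : Finset ℤ)
    (a b : ℤ → ℂ) :
    ‖∑ v ∈ I, ∑ u ∈ J, a v * shiftTrace A (u - v) * b u‖
      ≤ ‖A‖ / 2 * (∑ v ∈ I, ‖a v‖ ^ 2 + ∑ u ∈ J, ‖b u‖ ^ 2) := by
  have hbound := ((hasSum_sum_sq_indicator_shift (N := N) I a).add
    (hasSum_sum_sq_indicator_shift (N := N) J b)).mul_left (‖A‖ / 2)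
  rw [sum_sum_mul_shiftTrace_mul_eq_tsum, norm_mul, norm_inv, Complex.norm_natCast]
  refine inv_mul_le_of_le_mul₀ (Nat.cast_nonneg _) (by positivity) ?_
  calc _ ≤ ‖A‖ / 2 * (N * ∑ v ∈ I, ‖a v‖ ^ 2 + N * ∑ u ∈ J, ‖b u‖ ^ 2) :=
        tsum_of_norm_bounded hbound fun s => norm_dotProduct_mulVec_le A _ _
    _ = N * (‖A‖ / 2 * (∑ v ∈ I, ‖a v‖ ^ 2 + ∑ u ∈ J, ‖b u‖ ^ 2)) := by ring

end ShiftMatrix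

section SchwingerDysonSequence

/-- The truncated convolution `∑_{v ∈ I} c_v T_v T_{u-v}`. -/
def weightedConv (I : Finset ℤ) (c : ℤ → ℝ) (T : ℤ → ℂ) (u : ℤ) : ℂ :=
  ∑ v ∈ I, c v * T v * T (u - v)

/-- The defect of the Schwinger–Dyson equation `z T_u = δ_{u0} + 2 ∑_v c_v T_v T_{u-v}`, paired with
`conj T_u` so that summing its imaginary part over `u` controls the energy `∑ |T_u|²`. -/
def sdDefect (I : Finset ℤ) (c : ℤ → ℝ) (z : ℂ) (T : ℤ → ℂ) (u : ℤ) : ℂ :=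
  conj (T u) * (z * T u - (if u = 0 then 1 else 0) - 2 * weightedConv I c T u)

/-- The Toeplitz form of the sequence `T` has norm at most `g` on `ℓ²(ℤ)`, with the mean
`(‖a‖² + ‖b‖²) / 2` in place of `‖a‖ ‖b‖`. -/
def ToeplitzBound (T : ℤ → ℂ) (g : ℝ) : Prop :=
  ∀ (I J : Finset ℤ) (a b : ℤ → ℂ), ‖∑ v ∈ I, ∑ u ∈ J, a v * T (u - v) * b u‖
    ≤ g / 2 * (∑ v ∈ I, ‖a v‖ ^ 2 + ∑ u ∈ J, ‖b u‖ ^ 2)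

variable {T : ℤ → ℂ} {g : ℝ} {c : ℤ → ℝ} {I J : Finset ℤ} {z : ℂ} {δ : ℝ}

theorem ToeplitzBound.sum_sq_le (hT : ToeplitzBound T g) (hg : 0 < g) (J : Finset ℤ) :
    ∑ u ∈ J, ‖T u‖ ^ 2 ≤ g ^ 2 := by
  have h := hT {0} J (fun _ => (g : ℂ)) fun u => conj (T u)
  have hform : ∑ u ∈ J, (g : ℂ) * T (u - 0) * conj (T u) = ((g * ∑ u ∈ J, ‖T u‖ ^ 2 : ℝ) : ℂ) := by
    push_cast
    rw [Finset.mul_sum]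
    exact Finset.sum_congr rfl fun u _ => by rw [sub_zero, mul_assoc, Complex.mul_conj']
  rw [Finset.sum_singleton, hform, Complex.norm_of_nonneg (by positivity)] at h
  simp only [Finset.sum_singleton, Complex.norm_of_nonneg hg.le, RCLike.norm_conj] at h
  nlinarith

theorem ToeplitzBound.norm_le (hT : ToeplitzBound T g) (hg : 0 < g) (u : ℤ) : ‖T u‖ ≤ g := by
  have h := hT.sum_sq_le hg {u}
  rw [Finset.sum_singleton] at h
  exact (sq_le_sq₀ (norm_nonneg _) hg.le).1 h

theorem ToeplitzBound.norm_sum_conj_mul_weightedConv_le (hT : ToeplitzBound T g) (hg : 0 ≤ g)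
    {m : ℝ} (hc : ∀ v ∈ I, |c v| ≤ m) (hm : 0 ≤ m) :
    ‖∑ u ∈ J, conj (T u) * weightedConv I c T u‖
      ≤ m * (g / 2 * (∑ v ∈ I, ‖T v‖ ^ 2 + ∑ u ∈ J, ‖T u‖ ^ 2)) := by
  rcases hm.eq_or_lt with rfl | hm
  · have hconv (u : ℤ) : weightedConv I c T u = 0 :=
      Finset.sum_eq_zero fun v hv => by simp [abs_nonpos_iff.1 (hc v hv)]
    simp [hconv]
  have hform : ∑ u ∈ J, conj (T u) * weightedConv I c T u
      = m * ∑ v ∈ I, ∑ u ∈ J, (c v / m * T v) * T (u - v) * conj (T u) := by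
    rw [Finset.sum_comm, Finset.mul_sum]
    simp only [weightedConv, Finset.mul_sum]
    refine Finset.sum_congr rfl fun u _ => Finset.sum_congr rfl fun v _ => ?_
    have : (m : ℂ) ≠ 0 := by exact_mod_cast hm.ne'
    field_simp
  rw [hform, norm_mul, Complex.norm_of_nonneg hm.le]
  refine mul_le_mul_of_nonneg_left ((hT I J _ _).trans ?_) hm.le
  simp only [RCLike.norm_conj]
  gcongr with v hv
  rw [norm_mul, ← Complex.ofReal_div, Complex.norm_real, Real.norm_eq_abs, abs_div, abs_of_pos hm]
  exact mul_le_of_le_one_left (norm_nonneg _) ((div_le_one hm).2 (hc v hv))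

theorem weightedConv_eq_add_inter_add_sdiff (hI : 0 ∈ I) (hJ : 0 ∉ J) (u : ℤ) :
    weightedConv I c T u = weightedConv {0} c T u + weightedConv (I ∩ J) c T u +
      weightedConv ((I \ J).erase 0) c T u := by
  have h0 : 0 ∈ I \ J := Finset.mem_sdiff.2 ⟨hI, hJ⟩
  simp only [weightedConv]
  rw [← Finset.sum_inter_add_sum_sdiff I J, ← Finset.add_sum_erase _ _ h0, Finset.sum_singleton]
  ring

theorem ToeplitzBound.norm_sum_conj_mul_weightedConv_le_of_tail (hT : ToeplitzBound T g)
    (hg : 0 < g) (hI : 0 ∈ I) (hJ : 0 ∉ J) (hc : ∀ v, |c v| ≤ c 0) (hδ : 0 ≤ δ)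
    (hcδ : ∀ v ∉ J, v ≠ 0 → |c v| ≤ δ) :
    ‖∑ u ∈ J, conj (T u) * weightedConv I c T u‖
      ≤ 2 * c 0 * g * ∑ u ∈ J, ‖T u‖ ^ 2 + g ^ 3 * δ := by
  have hc0 : 0 ≤ c 0 := (abs_nonneg _).trans (hc 0)
  set Q := ∑ u ∈ J, ‖T u‖ ^ 2 with hQ
  have hzero : ‖∑ u ∈ J, conj (T u) * weightedConv {0} c T u‖ ≤ c 0 * g * Q := by
    rw [hQ, Finset.mul_sum]
    refine norm_sum_le_of_le _ fun u _ => ?_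
    rw [weightedConv, Finset.sum_singleton, sub_zero, norm_mul, norm_mul, norm_mul,
      RCLike.norm_conj, Complex.norm_of_nonneg hc0]
    calc ‖T u‖ * (c 0 * ‖T 0‖ * ‖T u‖) = c 0 * ‖T 0‖ * ‖T u‖ ^ 2 := by ring
      _ ≤ c 0 * g * ‖T u‖ ^ 2 := by gcongr; exact hT.norm_le hg 0
  have hnear : ‖∑ u ∈ J, conj (T u) * weightedConv (I ∩ J) c T u‖ ≤ c 0 * g * Q := by
    refine (hT.norm_sum_conj_mul_weightedConv_le hg.le (fun v _ => hc v) hc0).trans ?_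
    have : ∑ v ∈ I ∩ J, ‖T v‖ ^ 2 ≤ Q :=
      Finset.sum_le_sum_of_subset_of_nonneg Finset.inter_subset_right fun _ _ _ => sq_nonneg _
    calc c 0 * (g / 2 * (∑ v ∈ I ∩ J, ‖T v‖ ^ 2 + Q)) ≤ c 0 * (g / 2 * (Q + Q)) := by gcongr
      _ = c 0 * g * Q := by ring
  have hfar : ‖∑ u ∈ J, conj (T u) * weightedConv ((I \ J).erase 0) c T u‖ ≤ g ^ 3 * δ := by
    refine (hT.norm_sum_conj_mul_weightedConv_le hg.le (fun v hv => ?_) hδ).trans ?_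
    · simp only [Finset.mem_erase, Finset.mem_sdiff] at hv
      exact hcδ v hv.2.2 hv.1
    · calc δ * (g / 2 * (∑ v ∈ (I \ J).erase 0, ‖T v‖ ^ 2 + Q))
          ≤ δ * (g / 2 * (g ^ 2 + g ^ 2)) := by gcongr <;> exact hT.sum_sq_le hg _
        _ = g ^ 3 * δ := by ring
  simp only [weightedConv_eq_add_inter_add_sdiff hI hJ, mul_add, Finset.sum_add_distrib]
  linarith [norm_add₃_le (a := ∑ u ∈ J, conj (T u) * weightedConv {0} c T u)
    (b := ∑ u ∈ J, conj (T u) * weightedConv (I ∩ J) c T u)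
    (c := ∑ u ∈ J, conj (T u) * weightedConv ((I \ J).erase 0) c T u)]

theorem ToeplitzBound.energy_le (hT : ToeplitzBound T g) (hg : 0 < g) (hI : 0 ∈ I) (hJ : 0 ∉ J)
    (hc : ∀ v, |c v| ≤ c 0) (hδ : 0 ≤ δ) (hcδ : ∀ v ∉ J, v ≠ 0 → |c v| ≤ δ) :
    (z.im - 4 * c 0 * g) * ∑ u ∈ J, ‖T u‖ ^ 2
      ≤ (∑ u ∈ J, sdDefect I c z T u).im + 2 * g ^ 3 * δ := by
  set S := ∑ u ∈ J, conj (T u) * weightedConv I c T u with hS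
  have hdefect : ∑ u ∈ J, sdDefect I c z T u = z * (∑ u ∈ J, ‖T u‖ ^ 2 : ℝ) - (2 : ℝ) * S := by
    rw [hS, Complex.ofReal_sum, Finset.mul_sum, Finset.mul_sum, ← Finset.sum_sub_distrib]
    refine Finset.sum_congr rfl fun u hu => ?_
    rw [sdDefect, if_neg (ne_of_mem_of_not_mem hu hJ), Complex.ofReal_pow, ← Complex.conj_mul',
      Complex.ofReal_ofNat]
    ring
  have him : S.im ≤ _ := (le_abs_self _).trans <| (Complex.abs_im_le_norm _).trans <|
    hT.norm_sum_conj_mul_weightedConv_le_of_tail hg hI hJ hc hδ hcδ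
  rw [hdefect, Complex.sub_im, Complex.im_mul_ofReal, Complex.im_ofReal_mul]
  linarith

theorem ToeplitzBound.norm_weightedConv_zero_sub_le (hT : ToeplitzBound T g) (hg : 0 < g)
    (hsymm : ∀ u, T (-u) = T u) (hI : 0 ∈ I) (hc : ∀ v, |c v| ≤ c 0) (hδ : 0 ≤ δ)
    (hcδ : ∀ v ∉ J, v ≠ 0 → |c v| ≤ δ) :
    ‖weightedConv I c T 0 - c 0 * T 0 ^ 2‖ ≤ c 0 * ∑ u ∈ J, ‖T u‖ ^ 2 + δ * g ^ 2 := by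
  have hC : weightedConv I c T 0 = ∑ v ∈ I, c v * T v ^ 2 :=
    Finset.sum_congr rfl fun v _ => by rw [zero_sub, hsymm, sq, mul_assoc]
  rw [hC, ← Finset.add_sum_erase I _ hI, add_sub_cancel_left]
  have hterm (v : ℤ) : ‖(c v : ℂ) * T v ^ 2‖ = |c v| * ‖T v‖ ^ 2 := by
    rw [norm_mul, norm_pow, Complex.norm_real, Real.norm_eq_abs]
  calc ‖∑ v ∈ I.erase 0, (c v : ℂ) * T v ^ 2‖ ≤ ∑ v ∈ I.erase 0, |c v| * ‖T v‖ ^ 2 :=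
        norm_sum_le_of_le _ fun v _ => (hterm v).le
    _ = ∑ v ∈ I.erase 0 with v ∈ J, |c v| * ‖T v‖ ^ 2 +
          ∑ v ∈ I.erase 0 with v ∉ J, |c v| * ‖T v‖ ^ 2 :=
        (Finset.sum_filter_add_sum_filter_not _ _ _).symm
    _ ≤ ∑ v ∈ J, c 0 * ‖T v‖ ^ 2 + ∑ v ∈ I.erase 0 with v ∉ J, δ * ‖T v‖ ^ 2 := by
        gcongr with v hv
        · refine (Finset.sum_le_sum fun v _ =>
            mul_le_mul_of_nonneg_right (hc v) (sq_nonneg _)).trans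
              (Finset.sum_le_sum_of_subset_of_nonneg
                (fun v hv => (Finset.mem_filter.1 hv).2) ?_)
          exact fun v _ _ => mul_nonneg ((abs_nonneg _).trans (hc 0)) (sq_nonneg _)
        · exact hcδ v (Finset.mem_filter.1 hv).2 (Finset.ne_of_mem_erase (Finset.mem_filter.1 hv).1)
    _ ≤ c 0 * ∑ u ∈ J, ‖T u‖ ^ 2 + δ * g ^ 2 := by
        rw [← Finset.mul_sum, ← Finset.mul_sum]
        gcongr
        exact hT.sum_sq_le hg _

/-- Off the diagonal `u = 0` the Schwinger–Dyson equation is homogeneous, so for `Im z` large all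
energy sits at `T_0`, and the equation at `u = 0` closes up to the quadratic equation of the
semicircle law. -/
theorem ToeplitzBound.norm_quadratic_sub_sdDefect_le (hT : ToeplitzBound T g) (hg : 0 < g)
    (hsymm : ∀ u, T (-u) = T u) (hI : 0 ∈ I) (hJ : 0 ∉ J) (hc : ∀ v, |c v| ≤ c 0) (hδ : 0 ≤ δ)
    (hcδ : ∀ v ∉ J, v ≠ 0 → |c v| ≤ δ) (hz : 4 * c 0 * g < z.im) :
    ‖conj (T 0) * (z * T 0 - 1 - 2 * c 0 * T 0 ^ 2) - sdDefect I c z T 0‖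
      ≤ 2 * g * (c 0 * ((z.im - 4 * c 0 * g)⁻¹ *
          ((∑ u ∈ J, sdDefect I c z T u).im + 2 * g ^ 3 * δ)) + δ * g ^ 2) := by
  have henergy : ∑ u ∈ J, ‖T u‖ ^ 2 ≤
      (z.im - 4 * c 0 * g)⁻¹ * ((∑ u ∈ J, sdDefect I c z T u).im + 2 * g ^ 3 * δ) :=
    (le_inv_mul_iff₀ (sub_pos.2 hz)).2 (hT.energy_le hg hI hJ hc hδ hcδ)
  have hc0 : 0 ≤ c 0 := (abs_nonneg _).trans (hc 0)
  have hdiff : conj (T 0) * (z * T 0 - 1 - 2 * c 0 * T 0 ^ 2) - sdDefect I c z T 0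
      = conj (T 0) * (2 * (weightedConv I c T 0 - c 0 * T 0 ^ 2)) := by
    simp only [sdDefect, if_true]
    ring
  rw [hdiff, norm_mul, norm_mul, RCLike.norm_conj, Complex.norm_ofNat]
  calc ‖T 0‖ * (2 * ‖weightedConv I c T 0 - c 0 * T 0 ^ 2‖)
      ≤ g * (2 * (c 0 * ∑ u ∈ J, ‖T u‖ ^ 2 + δ * g ^ 2)) := by
        gcongr
        · exact hT.norm_le hg 0
        · exact hT.norm_weightedConv_zero_sub_le hg hsymm hI hc hδ hcδ
    _ ≤ _ := by
        rw [← mul_assoc, mul_comm g 2]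
        gcongr

end SchwingerDysonSequence

section SymmetricPerturbation

variable {n : Type*} [Fintype n] [DecidableEq n]

/-- The direction `e_{jk} + e_{kj}` in the space of symmetric matrices. -/
def symSingle (j k : n) : Matrix n n ℂ := Matrix.single j k 1 + Matrix.single k j 1

theorem mul_symSingle_mul_apply (P Q : Matrix n n ℂ) (i j k l : n) :
    (P * symSingle j k * Q : Matrix n n ℂ) i l = P i j * Q k l + P i k * Q j l := by
  have hsingle (j k : n) : (P * Matrix.single j k 1 * Q : Matrix n n ℂ) i l = P i j * Q k l := by
    rw [Matrix.mul_apply, Finset.sum_eq_single k]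
    · rw [Matrix.mul_single_apply_same, mul_one]
    · intro b _ hb
      rw [Matrix.mul_single_apply_of_ne _ _ _ _ _ hb, zero_mul]
    · exact fun h => absurd (Finset.mem_univ k) h
  rw [symSingle, mul_add, add_mul, Matrix.add_apply, hsingle, hsingle]

theorem sum_sum_mul_symSingle_mul_apply (P Q : Matrix n n ℂ) :
    ∑ j, ∑ k, (P * symSingle j k * Q : Matrix n n ℂ) k j
      = (Pᵀ * Q).trace + P.trace * Q.trace := by
  simp only [mul_symSingle_mul_apply, Finset.sum_add_distrib]
  congr 1
  rw [Finset.sum_comm, Matrix.trace, Matrix.trace, Finset.sum_mul_sum]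
  rfl

theorem sum_sum_conj_trace_mul_symSingle_mul (R B : Matrix n n ℂ) :
    ∑ j, ∑ k, conj (R * symSingle j k).trace * B k j
      = (Rᴴ * B).trace + (Rᵀᴴ * B).trace := by
  simp only [symSingle, mul_add, Matrix.trace_add, Matrix.trace_mul_single, MulOpposite.op_one,
    one_smul, map_add, add_mul, Finset.sum_add_distrib]
  rfl

end SymmetricPerturbation

section SchwingerDysonMatrix

variable {N : ℕ}

/-- The covariance direction `S_v (e_{jk} + e_{kj}) S_vᵀ` of a stationary symmetric field at lag
`v`. -/
def lagDirection (v : ℤ) (j k : Fin N) : Matrix (Fin N) (Fin N) ℂ :=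
  shiftMatrix N v * symSingle j k * shiftMatrix N (-v)

variable {G : Matrix (Fin N) (Fin N) ℂ}

theorem trace_shiftMatrix_mul (A : Matrix (Fin N) (Fin N) ℂ) (u : ℤ) :
    (shiftMatrix N u * A).trace = N * shiftTrace A u := by
  rcases eq_or_ne N 0 with rfl | hN
  · simp [Matrix.trace]
  · rw [shiftTrace, mul_inv_cancel_left₀ (Nat.cast_ne_zero.2 hN)]

theorem norm_conj_shiftMatrix_mul_le (A : Matrix (Fin N) (Fin N) ℂ) (u v : ℤ) :
    ‖(shiftMatrix N u * A * shiftMatrix N v)ᴴ‖ ≤ ‖A‖ := by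
  rw [Matrix.l2_opNorm_conjTranspose]
  exact (norm_mul_shiftMatrix_le _ _).trans (norm_shiftMatrix_mul_le _ _)

theorem norm_mul_shiftMatrix_mul_le (A B : Matrix (Fin N) (Fin N) ℂ) (u : ℤ) :
    ‖A * shiftMatrix N u * B‖ ≤ ‖A‖ * ‖B‖ :=
  (Matrix.l2_opNorm_mul _ _).trans
    (mul_le_mul_of_nonneg_right (norm_mul_shiftMatrix_le _ _) (norm_nonneg _))

theorem sum_sum_mul_lagDirection_mul_apply (hG : Gᵀ = G) (v u : ℤ) :
    ∑ j, ∑ k, (G * lagDirection v j k * G * shiftMatrix N u : Matrix (Fin N) (Fin N) ℂ) k j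
      = (shiftMatrix N (-v) * G * (shiftMatrix N (-v) * G * shiftMatrix N u)).trace +
        (N * shiftTrace G v) * (shiftMatrix N u * shiftMatrix N (-v) * G).trace := by
  have h := sum_sum_mul_symSingle_mul_apply (G * shiftMatrix N v)
    (shiftMatrix N (-v) * G * shiftMatrix N u)
  rw [Matrix.transpose_mul, transpose_shiftMatrix, hG] at h
  rw [Matrix.mul_assoc (shiftMatrix N u), Matrix.trace_mul_comm (shiftMatrix N u),
    ← trace_shiftMatrix_mul, Matrix.trace_mul_comm (shiftMatrix N v), ← h]
  simp only [lagDirection, Matrix.mul_assoc]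

theorem sum_sum_conj_shiftTrace_mul_lagDirection_mul (hG : Gᵀ = G) (v u : ℤ)
    (B : Matrix (Fin N) (Fin N) ℂ) :
    ∑ j, ∑ k, conj (shiftTrace (G * lagDirection v j k * G) u) * B k j
      = (N : ℂ)⁻¹ *
        (((shiftMatrix N (-v) * (G * shiftMatrix N u * G) * shiftMatrix N v)ᴴ * B).trace +
          ((shiftMatrix N (-v) * (G * shiftMatrix N (-u) * G) * shiftMatrix N v)ᴴ * B).trace) := by
  have h := sum_sum_conj_trace_mul_symSingle_mul
    (shiftMatrix N (-v) * (G * shiftMatrix N u * G) * shiftMatrix N v) B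
  simp only [Matrix.transpose_mul, transpose_shiftMatrix, hG, neg_neg] at h
  have htr (j k : Fin N) : shiftTrace (G * lagDirection v j k * G) u = (N : ℂ)⁻¹ *
      (shiftMatrix N (-v) * (G * shiftMatrix N u * G) * shiftMatrix N v * symSingle j k).trace := by
    have h := Matrix.trace_mul_comm (shiftMatrix N u * G * shiftMatrix N v * symSingle j k)
      (shiftMatrix N (-v) * G)
    simp only [Matrix.mul_assoc] at h
    simp only [shiftTrace, lagDirection, Matrix.mul_assoc, h]
  simp only [htr, map_mul, map_inv₀, map_natCast, mul_assoc (N : ℂ)⁻¹, ← Finset.mul_sum, h]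
  simp only [Matrix.mul_assoc]

/-- The derivative of `A ↦ conj (T_u) (G S_u)_{kj}` in the direction `K`, where `G` is the resolvent
of `A` and `T` its shift trace. -/
def sdIntegrand (G K : Matrix (Fin N) (Fin N) ℂ) (u : ℤ) (j k : Fin N) : ℂ :=
  conj (shiftTrace G u) * (G * K * G * shiftMatrix N u : Matrix (Fin N) (Fin N) ℂ) k j +
    conj (shiftTrace (G * K * G) u) * (G * shiftMatrix N u : Matrix (Fin N) (Fin N) ℂ) k j

theorem norm_trace_conjTranspose_mul_shiftMatrix_le {g : ℝ} (hGg : ‖G‖ ≤ g) (p q r u : ℤ) :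
    ‖((shiftMatrix N p * (G * shiftMatrix N q * G) * shiftMatrix N r)ᴴ *
      (G * shiftMatrix N u)).trace‖ ≤ N * g ^ 3 := by
  have hg : 0 ≤ g := (norm_nonneg _).trans hGg
  have hGqG : ‖G * shiftMatrix N q * G‖ ≤ g * g :=
    (norm_mul_shiftMatrix_mul_le G G q).trans (by gcongr)
  have h := norm_trace_mul_le ((norm_conj_shiftMatrix_mul_le _ p r).trans hGqG)
    ((norm_mul_shiftMatrix_le u G).trans hGg)
  rwa [Fintype.card_fin, ← pow_two, ← pow_succ] at h

theorem norm_sum_sum_lagDirection_sub_le (hG : Gᵀ = G) {g : ℝ} (hGg : ‖G‖ ≤ g) (v u : ℤ) :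
    ‖∑ j, ∑ k, sdIntegrand G (lagDirection v j k) u j k -
        N ^ 2 * (conj (shiftTrace G u) * (shiftTrace G v * shiftTrace G (u - v)))‖
      ≤ (3 + |(u : ℝ)|) * N * g ^ 3 := by
  have hg : 0 ≤ g := (norm_nonneg _).trans hGg
  have hT (u : ℤ) : ‖shiftTrace G u‖ ≤ g := (norm_shiftTrace_le G u).trans hGg
  simp only [sdIntegrand, Finset.sum_add_distrib, ← Finset.mul_sum,
    sum_sum_mul_lagDirection_mul_apply hG, sum_sum_conj_shiftTrace_mul_lagDirection_mul hG]
  set t₁ := (shiftMatrix N (-v) * G * (shiftMatrix N (-v) * G * shiftMatrix N u)).trace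
  set t₂ := (shiftMatrix N u * shiftMatrix N (-v) * G).trace
  set t₃ := ((shiftMatrix N (-v) * (G * shiftMatrix N u * G) * shiftMatrix N v)ᴴ *
    (G * shiftMatrix N u)).trace
  set t₄ := ((shiftMatrix N (-v) * (G * shiftMatrix N (-u) * G) * shiftMatrix N v)ᴴ *
    (G * shiftMatrix N u)).trace
  have h₁ : ‖t₁‖ ≤ N * g ^ 2 := by
    simpa [sq] using norm_trace_mul_le ((norm_shiftMatrix_mul_le (-v) G).trans hGg)
      ((norm_mul_shiftMatrix_le u _).trans ((norm_shiftMatrix_mul_le (-v) G).trans hGg))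
  have h₂ : ‖t₂ - N * shiftTrace G (u - v)‖ ≤ |(u : ℝ)| * g := by
    rw [← trace_shiftMatrix_mul, sub_eq_add_neg u]
    exact (norm_trace_shiftMatrix_mul_shiftMatrix_mul_sub_le u (-v) G).trans (by gcongr)
  have h₃₄ (w : ℤ) := norm_trace_conjTranspose_mul_shiftMatrix_le hGg (-v) w v u
  have hN : ‖(N : ℂ)⁻¹‖ ≤ 1 := by
    rw [norm_inv, Complex.norm_natCast]
    exact Nat.cast_inv_le_one N
  calc ‖conj (shiftTrace G u) * (t₁ + N * shiftTrace G v * t₂) + (N : ℂ)⁻¹ * (t₃ + t₄) -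
          N ^ 2 * (conj (shiftTrace G u) * (shiftTrace G v * shiftTrace G (u - v)))‖
      = ‖conj (shiftTrace G u) * t₁ + conj (shiftTrace G u) * (N * shiftTrace G v *
          (t₂ - N * shiftTrace G (u - v))) + (N : ℂ)⁻¹ * (t₃ + t₄)‖ := by
        congr 1
        ring
    _ ≤ g * (N * g ^ 2) + g * (N * g * (|(u : ℝ)| * g)) + 1 * (N * g ^ 3 + N * g ^ 3) := by
        refine norm_add₃_le.trans ?_
        simp only [norm_mul, RCLike.norm_conj, Complex.norm_natCast]
        gcongr
        · exact hT u
        · exact hT u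
        · exact hT v
        · exact (norm_add_le _ _).trans (add_le_add (h₃₄ u) (h₃₄ (-u)))
    _ = (3 + |(u : ℝ)|) * N * g ^ 3 := by ring

/-- The covariance `E[W_{jk} W]` of the normalized symmetrized field against its `(j, k)` entry,
for a field whose covariance lives on the diagonal lags `(v, v)` with weight `c v`. -/
def covDirection (c : ℤ → ℝ) (j k : Fin N) : Matrix (Fin N) (Fin N) ℂ :=
  (2 / N : ℂ) • ∑ v ∈ Finset.Icc (-N : ℤ) N, (c v : ℂ) • lagDirection v j k

theorem sdIntegrand_covDirection (c : ℤ → ℝ) (u : ℤ) (j k : Fin N) :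
    sdIntegrand G (covDirection c j k) u j k = 2 / N *
      ∑ v ∈ Finset.Icc (-N : ℤ) N, c v * sdIntegrand G (lagDirection v j k) u j k := by
  simp only [sdIntegrand, covDirection, shiftTrace, Matrix.mul_smul, Matrix.smul_mul,
    Matrix.trace_smul, Matrix.trace_sum, Matrix.smul_apply,
    Matrix.sum_apply, map_mul, map_sum, smul_eq_mul, Complex.conj_ofReal, map_div₀, map_ofNat,
    map_natCast, mul_add, Finset.sum_add_distrib, Finset.mul_sum, Finset.sum_mul]
  congr 1 <;> exact Finset.sum_congr rfl fun v _ => by ring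

theorem norm_sum_sum_sdIntegrand_covDirection_sub_le [NeZero N] (hG : Gᵀ = G) {g : ℝ}
    (hGg : ‖G‖ ≤ g) (c : ℤ → ℝ) (u : ℤ) :
    ‖(N : ℂ)⁻¹ * ∑ j, ∑ k, sdIntegrand G (covDirection c j k) u j k -
        conj (shiftTrace G u) * (2 * weightedConv (Finset.Icc (-N : ℤ) N) c (shiftTrace G) u)‖
      ≤ (6 + 2 * |(u : ℝ)|) * g ^ 3 * ((N : ℝ)⁻¹ * ∑ v ∈ Finset.Icc (-N : ℤ) N, |c v|) := by
  have hN : (N : ℂ) ≠ 0 := Nat.cast_ne_zero.2 (NeZero.ne N)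
  have hsum : (N : ℂ)⁻¹ * ∑ j, ∑ k, sdIntegrand G (covDirection c j k) u j k -
      conj (shiftTrace G u) * (2 * weightedConv (Finset.Icc (-N : ℤ) N) c (shiftTrace G) u)
      = ∑ v ∈ Finset.Icc (-N : ℤ) N, 2 * (N : ℂ)⁻¹ ^ 2 * c v *
          (∑ j, ∑ k, sdIntegrand G (lagDirection v j k) u j k -
            N ^ 2 * (conj (shiftTrace G u) * (shiftTrace G v * shiftTrace G (u - v)))) := by
    have hswap : ∑ j, ∑ k, ∑ v ∈ Finset.Icc (-N : ℤ) N,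
        c v * sdIntegrand G (lagDirection v j k) u j k
        = ∑ v ∈ Finset.Icc (-N : ℤ) N,
            c v * ∑ j, ∑ k, sdIntegrand G (lagDirection v j k) u j k := by
      simp only [Finset.mul_sum]
      rw [Finset.sum_comm (s := Finset.Icc (-N : ℤ) N)]
      exact Finset.sum_congr rfl fun j _ => Finset.sum_comm
    simp only [sdIntegrand_covDirection, ← Finset.mul_sum, hswap, weightedConv]
    simp only [Finset.mul_sum (s := Finset.Icc (-N : ℤ) N), ← Finset.sum_sub_distrib]
    refine Finset.sum_congr rfl fun v _ => ?_
    field_simp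
  rw [hsum, Finset.mul_sum, Finset.mul_sum]
  refine norm_sum_le_of_le _ fun v _ => ?_
  rw [norm_mul, norm_mul, norm_mul, norm_pow, norm_inv, Complex.norm_natCast, Complex.norm_ofNat,
    Complex.norm_real, Real.norm_eq_abs]
  calc 2 * (N : ℝ)⁻¹ ^ 2 * |c v| * _ ≤ 2 * (N : ℝ)⁻¹ ^ 2 * |c v| * ((3 + |(u : ℝ)|) * N * g ^ 3) :=
        mul_le_mul_of_nonneg_left (norm_sum_sum_lagDirection_sub_le hG hGg v u) (by positivity)
    _ = (6 + 2 * |(u : ℝ)|) * g ^ 3 * ((N : ℝ)⁻¹ * |c v|) := by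
        have : (N : ℝ) ≠ 0 := Nat.cast_ne_zero.2 (NeZero.ne N)
        field_simp
        ring

end SchwingerDysonMatrix

section GaussianIntegrationByParts

theorem hasDerivAt_gaussianPDFReal (m : ℝ) (v : NNReal) (x : ℝ) :
    HasDerivAt (gaussianPDFReal m v) (-(v : ℝ)⁻¹ * ((x - m) * gaussianPDFReal m v x)) x := by
  rw [gaussianPDFReal_def]
  have h := ((((hasDerivAt_id x).sub_const m).pow 2).neg.div_const (2 * v : ℝ)).exp.const_mul
    (√(2 * π * v))⁻¹
  refine h.congr_deriv ?_
  simp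
  field

theorem integral_mul_gaussianReal_eq_integral_deriv (v : NNReal) {f f' : ℝ → ℂ} {C : ℝ}
    (hf : ∀ x, HasDerivAt f (f' x) x) (hf' : Continuous f') (hb : ∀ x, ‖f x‖ ≤ C)
    (hb' : ∀ x, ‖f' x‖ ≤ C) :
    ∫ x, (x : ℂ) * f x ∂gaussianReal 0 v = v * ∫ x, f' x ∂gaussianReal 0 v := by
  rcases eq_or_ne v 0 with rfl | hv
  · simp [gaussianReal_zero_var]
  have hv' : (v : ℂ) ≠ 0 := by exact_mod_cast hv
  have hfc : Continuous f := continuous_iff_continuousAt.2 fun x => (hf x).continuousAt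
  have hpdf_deriv (x : ℝ) : HasDerivAt (fun x => (gaussianPDFReal 0 v x : ℂ))
      (-(v : ℂ)⁻¹ * (x * gaussianPDFReal 0 v x : ℝ)) x :=
    (hasDerivAt_gaussianPDFReal 0 v x).ofReal_comp.congr_deriv (by push_cast; ring)
  have hpdf_int : Integrable fun x => (gaussianPDFReal 0 v x : ℂ) :=
    (integrable_gaussianPDFReal 0 v).ofReal
  have hmoment_int : Integrable fun x => ((x * gaussianPDFReal 0 v x : ℝ) : ℂ) := by
    have h := (memLp_id_gaussianReal (μ := 0) (v := v) 1).integrable le_rfl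
    rw [gaussianReal_of_var_ne_zero 0 hv, integrable_withDensity_iff (by fun_prop)
      (ae_of_all _ fun x => by simp [gaussianPDF])] at h
    simpa [gaussianPDF, gaussianPDFReal_nonneg] using h.ofReal (𝕜 := ℂ)
  have hparts := integral_mul_deriv_eq_deriv_mul_of_integrable
    (fun x _ => hf x) (fun x _ => hpdf_deriv x)
    ((hmoment_int.const_mul _).bdd_mul hfc.aestronglyMeasurable (ae_of_all _ hb))
    (hpdf_int.bdd_mul hf'.aestronglyMeasurable (ae_of_all _ hb'))
    (hpdf_int.bdd_mul hfc.aestronglyMeasurable (ae_of_all _ hb))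
  rw [integral_gaussianReal_eq_integral_smul hv, integral_gaussianReal_eq_integral_smul hv]
  calc ∫ x, gaussianPDFReal 0 v x • ((x : ℂ) * f x)
      = -(v : ℂ) * ∫ x, f x * (-(v : ℂ)⁻¹ * (x * gaussianPDFReal 0 v x : ℝ)) := by
        rw [← integral_const_mul]
        refine integral_congr_ae (ae_of_all _ fun x => ?_)
        simp only [Complex.real_smul, Complex.ofReal_mul]
        field_simp
    _ = v * ∫ x, gaussianPDFReal 0 v x • f' x := by
        rw [hparts, neg_mul_neg]
        simp only [Complex.real_smul, mul_comm]

theorem integral_gaussianReal_mul_line {E : Type*} [NormedAddCommGroup E] [NormedSpace ℝ E]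
    {κ : ℝ} (hκ : 0 < κ) (r : E) {w : E} {F F' : E → ℂ} {C : ℝ} (hF' : Continuous F')
    (hb : ∀ y, ‖F y‖ ≤ C) (hb' : ∀ y, ‖F' y‖ ≤ C) (hderiv : ∀ y, HasLineDerivAt ℝ F (F' y) y w) :
    ∫ x, (x : ℂ) * F (r + (x / κ) • w) ∂gaussianReal 0 κ.toNNReal
      = ∫ x, F' (r + (x / κ) • w) ∂gaussianReal 0 κ.toNNReal := by
  have hline (x : ℝ) : HasDerivAt (fun x : ℝ => F (r + (x / κ) • w))
      (κ⁻¹ • F' (r + (x / κ) • w)) x := by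
    have hshift : HasDerivAt (fun s : ℝ => (s - x) / κ) κ⁻¹ x := by
      simpa using ((hasDerivAt_id x).sub_const x).div_const κ
    have h := HasDerivAt.scomp_of_eq x (hderiv (r + (x / κ) • w)) hshift (by simp)
    refine h.congr_of_eventuallyEq (.of_forall fun s => congrArg F ?_)
    rw [add_assoc, ← add_smul]
    congr 2
    ring
  have hstein := integral_mul_gaussianReal_eq_integral_deriv κ.toNNReal (C := max C (‖κ⁻¹‖ * C))
    hline (by fun_prop) (fun x => (hb _).trans (le_max_left _ _)) fun x => by
      rw [norm_smul]
      exact le_max_of_le_right (mul_le_mul_of_nonneg_left (hb' _) (norm_nonneg _))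
  rw [hstein, integral_smul, Complex.real_smul, ← mul_assoc,
    show ((κ.toNNReal : ℝ) : ℂ) * ((κ⁻¹ : ℝ) : ℂ) = 1 by
      rw [Real.coe_toNNReal _ hκ.le, ← Complex.ofReal_mul, mul_inv_cancel₀ hκ.ne',
        Complex.ofReal_one],
    one_mul]

theorem ae_eq_zero_of_integral_mul_self_eq_zero {α : Type*} [MeasurableSpace α] {μ : Measure α}
    {f : α → ℝ} (hf : MemLp f 2 μ) (h : ∫ x, f x * f x ∂μ = 0) : ∀ᵐ x ∂μ, f x = 0 := by
  filter_upwards [(integral_eq_zero_iff_of_nonneg (fun x => mul_self_nonneg (f x))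
    (hf.integrable_mul hf)).1 h] with x hx using mul_self_eq_zero.1 hx

variable {Ω : Type*} [MeasurableSpace Ω] {P : Measure Ω} {E : Type*} [NormedAddCommGroup E]
  [NormedSpace ℝ E] [MeasurableSpace E] [BorelSpace E] [CompleteSpace E]
  [SecondCountableTopology E] {Y : Ω → E}

theorem clm_integral_clm_smul (hY : HasGaussianLaw Y P) (L M : StrongDual ℝ E) :
    M (∫ ω, L (Y ω) • Y ω ∂P) = ∫ ω, L (Y ω) * M (Y ω) ∂P := by
  have hint : Integrable (fun ω => L (Y ω) • Y ω) P :=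
    memLp_one_iff_integrable.1 (hY.memLp_two.smul (hY.map_fun L).memLp_two)
  rw [← M.integral_comp_comm hint]
  simp

theorem indepFun_clm_sub_regression (hY : HasGaussianLaw Y P) {L : StrongDual ℝ E}
    (hL : ∫ ω, L (Y ω) ∂P = 0) (hvar : ∫ ω, L (Y ω) * L (Y ω) ∂P ≠ 0) :
    IndepFun (fun ω => L (Y ω)) (fun ω => Y ω - (L (Y ω) / ∫ ω, L (Y ω) * L (Y ω) ∂P) •
      ∫ ω, L (Y ω) • Y ω ∂P) P := by
  have := hY.isProbabilityMeasure
  set κ := ∫ ω, L (Y ω) * L (Y ω) ∂P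
  set w := ∫ ω, L (Y ω) • Y ω ∂P
  let A : E →L[ℝ] ℝ × E := L.prod (.id ℝ E - (κ⁻¹ • L).smulRight w)
  have hA : (fun ω => (L (Y ω), Y ω - (L (Y ω) / κ) • w)) = fun ω => A (Y ω) := by
    funext ω
    simp [A, div_eq_inv_mul]
  refine HasGaussianLaw.indepFun_of_covariance_strongDual (hA ▸ hY.map_fun A) fun L₁ L₂ => ?_
  have hL2 (M : StrongDual ℝ E) : MemLp (fun ω => M (Y ω)) 2 P := (hY.map_fun M).memLp_two
  have h₁ : L₁ ∘ (fun ω => L (Y ω)) = fun ω => L₁ 1 * L (Y ω) := by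
    funext ω
    simpa [mul_comm] using L₁.map_smul (L (Y ω)) 1
  have h₂ : L₂ ∘ (fun ω => Y ω - (L (Y ω) / κ) • w) = fun ω => (L₂ - (κ⁻¹ * L₂ w) • L) (Y ω) := by
    funext ω
    simp only [Function.comp_apply, map_sub, map_smul, smul_eq_mul, sub_apply,
      smul_apply]
    ring
  rw [h₁, h₂, covariance_const_mul_left, covariance_eq_sub (hL2 L) (hL2 _)]
  simp only [hL, zero_mul, sub_zero, Pi.mul_apply, ← clm_integral_clm_smul hY]
  have hκ : L w = κ := clm_integral_clm_smul hY L L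
  simp only [sub_apply, smul_apply, smul_eq_mul]
  change L₁ 1 * (L₂ w - κ⁻¹ * L₂ w * L w) = 0
  rw [hκ]
  field_simp
  ring

theorem map_clm_prodMk_regression (hY : HasGaussianLaw Y P) {L : StrongDual ℝ E}
    (hL : ∫ ω, L (Y ω) ∂P = 0) (hvar : ∫ ω, L (Y ω) * L (Y ω) ∂P ≠ 0) :
    P.map (fun ω => (L (Y ω), Y ω - (L (Y ω) / ∫ ω, L (Y ω) * L (Y ω) ∂P) •
        ∫ ω, L (Y ω) • Y ω ∂P)) =
      (gaussianReal 0 (∫ ω, L (Y ω) * L (Y ω) ∂P).toNNReal).prod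
        (P.map fun ω => Y ω - (L (Y ω) / ∫ ω, L (Y ω) * L (Y ω) ∂P) • ∫ ω, L (Y ω) • Y ω ∂P) := by
  have := hY.isProbabilityMeasure
  have hLY : HasGaussianLaw (fun ω => L (Y ω)) P := hY.map_fun L
  have hYm := hY.aemeasurable
  rw [(indepFun_iff_map_prod_eq_prod_map_map hLY.aemeasurable (by fun_prop)).1
    (indepFun_clm_sub_regression hY hL hvar), hLY.map_eq_gaussianReal, hL,
    variance_of_integral_eq_zero hLY.aemeasurable hL]
  simp only [sq]

/-- **Gaussian integration by parts**: regressing `Y` on `L ∘ Y` leaves an independent remainder,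
and Stein's lemma applies in the one remaining direction. -/
theorem integral_clm_mul_eq_integral_lineDeriv (hY : HasGaussianLaw Y P) {L : StrongDual ℝ E}
    (hL : ∫ ω, L (Y ω) ∂P = 0) {F F' : E → ℂ} {C : ℝ} (hF : Continuous F) (hF' : Continuous F')
    (hb : ∀ y, ‖F y‖ ≤ C) (hb' : ∀ y, ‖F' y‖ ≤ C)
    (hderiv : ∀ y, HasLineDerivAt ℝ F (F' y) y (∫ ω, L (Y ω) • Y ω ∂P)) :
    ∫ ω, (L (Y ω) : ℂ) * F (Y ω) ∂P = ∫ ω, F' (Y ω) ∂P := by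
  have := hY.isProbabilityMeasure
  have hLY : HasGaussianLaw (fun ω => L (Y ω)) P := hY.map_fun L
  set κ := ∫ ω, L (Y ω) * L (Y ω) ∂P
  set w := ∫ ω, L (Y ω) • Y ω ∂P
  rcases (integral_nonneg fun ω => mul_self_nonneg (L (Y ω)) : 0 ≤ κ).eq_or_lt' with hκ | hκ
  · have hLY0 := ae_eq_zero_of_integral_mul_self_eq_zero hLY.memLp_two hκ
    have hw : w = 0 := integral_eq_zero_of_ae (by filter_upwards [hLY0] with ω hω; simp [hω])
    have hF'0 (y : E) : F' y = 0 :=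
      (hw ▸ hderiv y).unique (hasLineDerivAt_zero (f := F) (x := y) (𝕜 := ℝ))
    simp only [hF'0, integral_zero]
    exact integral_eq_zero_of_ae (by filter_upwards [hLY0] with ω hω; simp [hω])
  set R : Ω → E := fun ω => Y ω - (L (Y ω) / κ) • w with hR_def
  have hRm : AEMeasurable R P := by
    have := hY.aemeasurable
    fun_prop
  have : IsProbabilityMeasure (P.map R) := Measure.isProbabilityMeasure_map hRm
  have hprod : P.map (fun ω => (L (Y ω), R ω)) = (gaussianReal 0 κ.toNNReal).prod (P.map R) :=
    map_clm_prodMk_regression hY hL hκ.ne'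
  have fubini {H : ℝ × E → ℂ} (hH : Continuous H)
      (hHi : Integrable H ((gaussianReal 0 κ.toNNReal).prod (P.map R))) :
      ∫ ω, H (L (Y ω), R ω) ∂P = ∫ r, ∫ x, H (x, r) ∂gaussianReal 0 κ.toNNReal ∂P.map R := by
    rw [← integral_prod_symm _ hHi, ← hprod,
      integral_map (hLY.aemeasurable.prodMk hRm) hH.aestronglyMeasurable]
  have hY_eq (ω : Ω) : Y ω = R ω + (L (Y ω) / κ) • w := by simp [hR_def]
  have hFq : Continuous fun q : ℝ × E => F (q.2 + (q.1 / κ) • w) := by fun_prop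
  have hF'q : Continuous fun q : ℝ × E => F' (q.2 + (q.1 / κ) • w) := by fun_prop
  have hid : Integrable (fun x : ℝ => (x : ℂ)) (gaussianReal 0 κ.toNNReal) :=
    (memLp_one_iff_integrable.1 (memLp_id_gaussianReal 1)).ofReal
  have hL_side := fubini (H := fun q => (q.1 : ℂ) * F (q.2 + (q.1 / κ) • w)) (by fun_prop)
    ((hid.comp_fst _).mul_bdd (c := C) hFq.aestronglyMeasurable (ae_of_all _ fun q => hb _))
  have hR_side := fubini hF'q
    (Integrable.of_bound hF'q.aestronglyMeasurable C (ae_of_all _ fun q => hb' _))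
  simp only [← hY_eq] at hL_side hR_side
  rw [hL_side, hR_side]
  exact integral_congr_ae (ae_of_all _ fun r =>
    integral_gaussianReal_mul_line hκ r hF' hb hb' hderiv)

end GaussianIntegrationByParts

section GaussianField

variable {Ω : Type*} [MeasurableSpace Ω] {P : Measure Ω} {X : ℤ → ℤ → Ω → ℝ} {c : ℤ → ℝ} {N : ℕ}

/-- The covariance of the field is carried by the diagonal lags `(v, v)`, where it equals `c v`.
Spectrally, the density is a function of `x + y` alone. -/
def HasDiagonalCovariance (P : Measure Ω) (X : ℤ → ℤ → Ω → ℝ) (c : ℤ → ℝ) : Prop :=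
  ∀ j k l m : ℤ, ∫ ω, X j k ω * X l m ω ∂P = if l - j = m - k then c (l - j) else 0

/-- The `N × N` block of the field that enters `W_N`, as a random vector. -/
def fieldBlock (X : ℤ → ℤ → Ω → ℝ) (N : ℕ) (ω : Ω) : Fin N × Fin N → ℝ :=
  fun p => X ((p.1 : ℕ) + 1) ((p.2 : ℕ) + 1) ω

theorem StatGauss.measurable_fieldBlock (hX : StatGauss P X) : Measurable (fieldBlock X N) :=
  measurable_pi_lambda _ fun _ => hX.meas _ _

theorem StatGauss.hasGaussianLaw_fieldBlock (hX : StatGauss P X) (N : ℕ) :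
    HasGaussianLaw (fieldBlock X N) P := by
  refine ⟨isGaussian_of_map_eq_gaussianReal fun L => ?_⟩
  let e : Fin N × Fin N → ℤ × ℤ := fun p => ((p.1 : ℕ) + 1, (p.2 : ℕ) + 1)
  let a : (ℤ × ℤ) →₀ ℝ := ∑ p, Finsupp.single (e p) (L (Pi.single p 1))
  obtain ⟨v, hv⟩ := hX.gauss a
  refine ⟨0, v, ?_⟩
  rw [Measure.map_map (by fun_prop) hX.measurable_fieldBlock, ← hv]
  congr 1
  funext ω
  have hL : L (fieldBlock X N ω) = ∑ p, L (Pi.single p 1) * fieldBlock X N ω p := by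
    conv_lhs => rw [pi_eq_sum_univ' (fieldBlock X N ω), map_sum]
    refine Finset.sum_congr rfl fun p _ => ?_
    rw [map_smul, smul_eq_mul, mul_comm]
  have ha : ∑ p ∈ a.support, a p * X p.1 p.2 ω = a.sum fun p r => r * X p.1 p.2 ω := rfl
  rw [Function.comp_apply, hL, ha, ← Finsupp.sum_finsetSum_index (by simp) (by intros; ring)]
  refine Finset.sum_congr rfl fun p _ => ?_
  rw [Finsupp.sum_single_index (zero_mul _)]
  rfl

theorem StatGauss.exists_map_eq_gaussianReal (hX : StatGauss P X) (j k : ℤ) :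
    ∃ v, P.map (X j k) = gaussianReal 0 v := by
  obtain ⟨v, hv⟩ := hX.gauss (Finsupp.single (j, k) 1)
  refine ⟨v, ?_⟩
  simpa using hv

theorem StatGauss.memLp_two (hX : StatGauss P X) (j k : ℤ) : MemLp (X j k) 2 P := by
  obtain ⟨v, hv⟩ := hX.exists_map_eq_gaussianReal j k
  have h : MemLp id 2 (P.map (X j k)) := hv ▸ memLp_id_gaussianReal 2
  exact (memLp_map_measure_iff aestronglyMeasurable_id (hX.meas j k).aemeasurable).1 h

theorem StatGauss.integral_eq_zero (hX : StatGauss P X) (j k : ℤ) : ∫ ω, X j k ω ∂P = 0 := by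
  obtain ⟨v, hv⟩ := hX.exists_map_eq_gaussianReal j k
  calc ∫ ω, X j k ω ∂P = ∫ x, x ∂P.map (X j k) :=
        (integral_map (hX.meas j k).aemeasurable aestronglyMeasurable_id).symm
    _ = 0 := by rw [hv, integral_id_gaussianReal]

/-- `W_N / √N` as a linear function of the block of the field. -/
def symmetrize (N : ℕ) : (Fin N × Fin N → ℝ) →ₗ[ℝ] Matrix (Fin N) (Fin N) ℝ where
  toFun y := .of fun j k => (√N)⁻¹ * (y (j, k) + y (k, j))
  map_add' y y' := by
    ext j k
    simp only [Pi.add_apply, Matrix.of_apply, Matrix.add_apply]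
    ring
  map_smul' a y := by
    ext j k
    simp only [Pi.smul_apply, smul_eq_mul, Matrix.of_apply, Matrix.smul_apply, RingHom.id_apply]
    ring

/-- The `(j, k)` entry of `W_N / √N` as a functional of the block of the field. -/
def symEntry (j k : Fin N) : StrongDual ℝ (Fin N × Fin N → ℝ) :=
  (Matrix.entryLinearMap ℝ ℝ j k ∘ₗ symmetrize N).toContinuousLinearMap

theorem symEntry_apply (j k : Fin N) (y : Fin N × Fin N → ℝ) :
    symEntry j k y = symmetrize N y j k := rfl

theorem symmetrize_fieldBlock {Ω : Type*} (X : ℤ → ℤ → Ω → ℝ) (N : ℕ) (ω : Ω) :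
    symmetrize N (fieldBlock X N ω) = scaledW X N ω := rfl

theorem isHermitian_symmetrize (y : Fin N × Fin N → ℝ) : (symmetrize N y).IsHermitian := by
  ext j k
  simp [symmetrize, add_comm]

theorem isHermitian_scaledW {Ω : Type*} (X : ℤ → ℤ → Ω → ℝ) (N : ℕ) (ω : Ω) :
    (scaledW X N ω).IsHermitian :=
  isHermitian_symmetrize (fieldBlock X N ω)

theorem continuous_symmetrize : Continuous (symmetrize N) :=
  (symmetrize N).continuous_of_finiteDimensional

theorem StatGauss.memLp_two_scaledW (hX : StatGauss P X) (j k : Fin N) :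
    MemLp (fun ω => scaledW X N ω j k) 2 P :=
  ((hX.memLp_two _ _).add (hX.memLp_two _ _)).const_mul _

theorem StatGauss.integral_scaledW (hX : StatGauss P X) (j k : Fin N) :
    ∫ ω, scaledW X N ω j k ∂P = 0 := by
  have := (hX.hasGaussianLaw_fieldBlock N).isProbabilityMeasure
  have hint (j k : ℤ) : Integrable (X j k) P := (hX.memLp_two j k).integrable one_le_two
  simp only [scaledW]
  rw [integral_const_mul, integral_add (hint _ _) (hint _ _), hX.integral_eq_zero,
    hX.integral_eq_zero, add_zero, mul_zero]

theorem StatGauss.integral_scaledW_mul_scaledW (hX : StatGauss P X)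
    (hc : HasDiagonalCovariance P X c) (j k l m : Fin N) :
    ∫ ω, scaledW X N ω j k * scaledW X N ω l m ∂P = 2 / N *
      ((if (l : ℤ) - j = m - k then c (l - j) else 0) +
        if (m : ℤ) - j = l - k then c (m - j) else 0) := by
  have hint (a b a' b' : ℤ) : Integrable (fun ω => X a b ω * X a' b' ω) P :=
    (hX.memLp_two a b).integrable_mul (hX.memLp_two a' b')
  have hint_add (a b a' b' d e d' e' : ℤ) :
      Integrable (fun ω => X a b ω * X a' b' ω + X d e ω * X d' e' ω) P :=
    (hint a b a' b').add (hint d e d' e')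
  have hexp (ω : Ω) : scaledW X N ω j k * scaledW X N ω l m = (N : ℝ)⁻¹ *
      ((X (j + 1) (k + 1) ω * X (l + 1) (m + 1) ω + X (k + 1) (j + 1) ω * X (m + 1) (l + 1) ω) +
        (X (j + 1) (k + 1) ω * X (m + 1) (l + 1) ω +
          X (k + 1) (j + 1) ω * X (l + 1) (m + 1) ω)) := by
    have hsqrt : (√N)⁻¹ * (√N)⁻¹ = (N : ℝ)⁻¹ := by
      rw [← mul_inv, Real.mul_self_sqrt (Nat.cast_nonneg N)]
    simp only [scaledW]
    rw [← hsqrt]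
    ring
  simp only [hexp]
  rw [integral_const_mul, integral_add (hint_add ..) (hint_add ..),
    integral_add (hint ..) (hint ..), integral_add (hint ..) (hint ..)]
  rw [hc, hc, hc, hc]
  simp only [add_sub_add_right_eq_sub]
  have hswap (a b : ℤ) : (if a = b then c a else 0) = if b = a then c b else 0 := by
    rcases eq_or_ne a b with rfl | h
    · rfl
    · rw [if_neg h, if_neg h.symm]
  rw [hswap (m - k), hswap (l - k)]
  ring

theorem lagDirection_apply (v : ℤ) (j k l m : Fin N) :
    lagDirection v j k l m = (if (l : ℤ) - j = v ∧ (m : ℤ) - k = v then 1 else 0) +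
      if (m : ℤ) - j = v ∧ (l : ℤ) - k = v then 1 else 0 := by
  have hcond (a b : Fin N) : ((a : ℕ) : ℤ) = (b : ℕ) + v ↔ (a : ℤ) - b = v := by
    constructor <;> intro h <;> omega
  have hcond' (a b : Fin N) : ((b : ℕ) : ℤ) = (a : ℕ) + -v ↔ (a : ℤ) - b = v := by
    constructor <;> intro h <;> omega
  rw [lagDirection, mul_symSingle_mul_apply]
  simp only [shiftMatrix, Matrix.of_apply, hcond, hcond', ite_and, mul_ite, mul_one, mul_zero]
  split_ifs <;> rfl

theorem covDirection_apply (c : ℤ → ℝ) (j k l m : Fin N) :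
    covDirection c j k l m = ((2 / N *
      ((if (l : ℤ) - j = m - k then c (l - j) else 0) +
        if (m : ℤ) - j = l - k then c (m - j) else 0) : ℝ) : ℂ) := by
  have hsum (a b a' b' : Fin N) : (∑ v ∈ Finset.Icc (-N : ℤ) N,
      (c v : ℂ) * if (a : ℤ) - b = v ∧ (a' : ℤ) - b' = v then 1 else 0) =
      if (a : ℤ) - b = a' - b' then (c (a - b) : ℂ) else 0 := by
    rw [Finset.sum_eq_single ((a : ℤ) - b)]
    · simp [eq_comm (a := (a : ℤ) - b)]
    · intro v _ hv
      simp [hv.symm]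
    · intro h
      exact absurd (Finset.mem_Icc.2 (by omega)) h
  simp only [covDirection, Matrix.smul_apply, Matrix.sum_apply, lagDirection_apply, smul_eq_mul,
    mul_add, Finset.sum_add_distrib, hsum]
  push_cast [apply_ite Complex.ofReal]
  ring

theorem StatGauss.map_symmetrize_integral_symEntry_smul (hX : StatGauss P X)
    (hc : HasDiagonalCovariance P X c) (j k : Fin N) :
    (symmetrize N (∫ ω, symEntry j k (fieldBlock X N ω) • fieldBlock X N ω ∂P)).map Complex.ofReal
      = covDirection c j k := by
  ext l m
  have h := clm_integral_clm_smul (hX.hasGaussianLaw_fieldBlock N) (symEntry j k) (symEntry l m)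
  simp only [symEntry_apply, symmetrize_fieldBlock, hX.integral_scaledW_mul_scaledW hc] at h
  rw [Matrix.map_apply, covDirection_apply, ← h]
  rfl

end GaussianField

section SchwingerDysonEquation

/-- The normalized traces `N⁻¹ tr (S_u (z - W_N/√N)⁻¹)`, indexed by the lag `u`. At `u = 0` this is
the Stieltjes transform of the empirical spectral distribution. -/
def lagTrace {Ω : Type*} (X : ℤ → ℤ → Ω → ℝ) (N : ℕ) (z : ℂ) (ω : Ω) : ℤ → ℂ :=
  shiftTrace (realResolvent (scaledW X N ω) z)

variable {Ω : Type*} [MeasurableSpace Ω] {P : Measure Ω} {X : ℤ → ℤ → Ω → ℝ} {c : ℤ → ℝ}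
  {N : ℕ} {z : ℂ}

theorem conj_shiftTrace_mul_realResolvent_eq [NeZero N] {A : Matrix (Fin N) (Fin N) ℝ}
    (hA : A.IsHermitian) (hz : z.im ≠ 0) (u : ℤ) :
    conj (shiftTrace (realResolvent A z) u) *
        (z * shiftTrace (realResolvent A z) u - if u = 0 then 1 else 0)
      = (N : ℂ)⁻¹ * ∑ j, ∑ k, (A j k : ℂ) * (conj (shiftTrace (realResolvent A z) u) *
          (realResolvent A z * shiftMatrix N u : Matrix (Fin N) (Fin N) ℂ) k j) := by
  set G := realResolvent A z
  have htrace : z * shiftTrace G u - shiftTrace (1 : Matrix (Fin N) (Fin N) ℂ) u =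
      (N : ℂ)⁻¹ * (A.map Complex.ofReal * (G * shiftMatrix N u)).trace := by
    rw [← Matrix.mul_assoc, map_mul_realResolvent hA hz, sub_mul, Matrix.trace_sub, smul_mul_assoc,
      Matrix.trace_smul, one_mul, Matrix.trace_mul_comm, shiftTrace, shiftTrace, mul_one,
      smul_eq_mul]
    ring
  rw [← shiftTrace_one (N := N), htrace, Matrix.trace, Finset.mul_sum, Finset.mul_sum,
    Finset.mul_sum]
  refine Finset.sum_congr rfl fun j _ => ?_
  rw [Matrix.diag_apply, Matrix.mul_apply, Finset.mul_sum, Finset.mul_sum, Finset.mul_sum]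
  refine Finset.sum_congr rfl fun k _ => ?_
  rw [Matrix.map_apply]
  ring

theorem hasLineDerivAt_conj_shiftTrace_mul (hz : z.im ≠ 0) (u : ℤ) (j k : Fin N)
    (y w : Fin N × Fin N → ℝ) :
    HasLineDerivAt ℝ (fun y => conj (shiftTrace (realResolvent (symmetrize N y) z) u) *
        (realResolvent (symmetrize N y) z * shiftMatrix N u : Matrix (Fin N) (Fin N) ℂ) k j)
      (sdIntegrand (realResolvent (symmetrize N y) z) ((symmetrize N w).map Complex.ofReal) u j k)
      y w := by
  have hG := hasDerivAt_realResolvent_add_smul (isHermitian_symmetrize y) hz (symmetrize N w)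
  have hGS := hG.mul_const (shiftMatrix N u)
  have hentry : HasDerivAt (fun t : ℝ => (realResolvent (symmetrize N y + t • symmetrize N w) z *
      shiftMatrix N u : Matrix (Fin N) (Fin N) ℂ) k j) _ 0 :=
    ((Matrix.entryLinearMap ℝ ℂ k j).toContinuousLinearMap.hasFDerivAt.comp_hasDerivAt (0 : ℝ) hGS)
  have htrace :=
    ((Matrix.traceLinearMap (Fin N) ℝ ℂ).toContinuousLinearMap.hasFDerivAt.comp_hasDerivAt
      (0 : ℝ) (hG.const_mul (shiftMatrix N u))).const_mul (N : ℂ)⁻¹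
  have h := htrace.star.mul hentry
  simp only [HasLineDerivAt, map_add, map_smul]
  refine h.congr_deriv ?_
  simp [sdIntegrand, shiftTrace]
  ring

theorem continuous_realResolvent_symmetrize (hz : z.im ≠ 0) :
    Continuous fun y : Fin N × Fin N → ℝ => realResolvent (symmetrize N y) z :=
  continuous_realResolvent_comp isHermitian_symmetrize continuous_symmetrize hz

theorem continuous_shiftTrace (u : ℤ) :
    Continuous fun A : Matrix (Fin N) (Fin N) ℂ => shiftTrace A u :=
  continuous_const.mul (continuous_const.matrix_mul continuous_id).matrix_trace

theorem continuous_mul_shiftMatrix_apply (u : ℤ) (k j : Fin N) :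
    Continuous fun A : Matrix (Fin N) (Fin N) ℂ =>
      (A * shiftMatrix N u : Matrix (Fin N) (Fin N) ℂ) k j :=
  (continuous_id.matrix_mul continuous_const).matrix_elem k j

theorem continuous_sdIntegrand (K : Matrix (Fin N) (Fin N) ℂ) (u : ℤ) (j k : Fin N) :
    Continuous fun G : Matrix (Fin N) (Fin N) ℂ => sdIntegrand G K u j k := by
  have hGKG : Continuous fun G : Matrix (Fin N) (Fin N) ℂ => G * K * G := by fun_prop
  exact ((Complex.continuous_conj.comp (continuous_shiftTrace u)).mul
    ((continuous_mul_shiftMatrix_apply u k j).comp hGKG)).add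
      ((Complex.continuous_conj.comp ((continuous_shiftTrace u).comp hGKG)).mul
        (continuous_mul_shiftMatrix_apply u k j))

theorem continuous_conj_shiftTrace_mul (u : ℤ) (j k : Fin N) :
    Continuous fun G : Matrix (Fin N) (Fin N) ℂ => conj (shiftTrace G u) *
      (G * shiftMatrix N u : Matrix (Fin N) (Fin N) ℂ) k j :=
  (Complex.continuous_conj.comp (continuous_shiftTrace u)).mul
    (continuous_mul_shiftMatrix_apply u k j)

theorem continuous_sdDefect_shiftTrace (I : Finset ℤ) (c : ℤ → ℝ) (z : ℂ) (u : ℤ) :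
    Continuous fun G : Matrix (Fin N) (Fin N) ℂ => sdDefect I c z (shiftTrace G) u := by
  have hT := fun u => continuous_shiftTrace (N := N) u
  exact (Complex.continuous_conj.comp (hT u)).mul (((continuous_const.mul (hT u)).sub
    continuous_const).sub (continuous_const.mul (continuous_finsetSum _ fun v _ =>
      (continuous_const.mul (hT v)).mul (hT (u - v)))))

theorem exists_norm_comp_realResolvent_le (hz : 0 < z.im) {φ : Matrix (Fin N) (Fin N) ℂ → ℂ}
    (hφ : Continuous φ) :
    ∃ C, ∀ A : Matrix (Fin N) (Fin N) ℝ, A.IsHermitian → ‖φ (realResolvent A z)‖ ≤ C := by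
  obtain ⟨C, hC⟩ :=
    (isCompact_closedBall (0 : Matrix (Fin N) (Fin N) ℂ) z.im⁻¹).exists_bound_of_continuousOn
      hφ.continuousOn
  exact ⟨C, fun A hA => hC _ (mem_closedBall_zero_iff.2 (norm_realResolvent_le hA hz))⟩

theorem StatGauss.integral_scaledW_mul_eq_integral_sdIntegrand (hX : StatGauss P X)
    (hc : HasDiagonalCovariance P X c) (hz : 0 < z.im) (u : ℤ) (j k : Fin N) :
    ∫ ω, (scaledW X N ω j k : ℂ) * (conj (shiftTrace (realResolvent (scaledW X N ω) z) u) *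
        (realResolvent (scaledW X N ω) z * shiftMatrix N u : Matrix (Fin N) (Fin N) ℂ) k j) ∂P
      = ∫ ω, sdIntegrand (realResolvent (scaledW X N ω) z) (covDirection c j k) u j k ∂P := by
  have hF := continuous_conj_shiftTrace_mul (N := N) u j k
  have hF' := continuous_sdIntegrand (covDirection c j k) u j k
  have hG := continuous_realResolvent_symmetrize (N := N) hz.ne'
  obtain ⟨C, hC⟩ := exists_norm_comp_realResolvent_le hz hF
  obtain ⟨C', hC'⟩ := exists_norm_comp_realResolvent_le hz hF'
  refine integral_clm_mul_eq_integral_lineDeriv (hX.hasGaussianLaw_fieldBlock N) (L := symEntry j k)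
    (hX.integral_scaledW j k) (hF.comp hG) (hF'.comp hG)
    (fun y => (hC _ (isHermitian_symmetrize y)).trans (le_max_left C C'))
    (fun y => (hC' _ (isHermitian_symmetrize y)).trans (le_max_right C C')) fun y => ?_
  rw [← hX.map_symmetrize_integral_symEntry_smul hc]
  exact hasLineDerivAt_conj_shiftTrace_mul hz.ne' u j k y _

theorem StatGauss.aestronglyMeasurable_comp_realResolvent (hX : StatGauss P X) (hz : z.im ≠ 0)
    {φ : Matrix (Fin N) (Fin N) ℂ → ℂ} (hφ : Continuous φ) :
    AEStronglyMeasurable (fun ω => φ (realResolvent (scaledW X N ω) z)) P :=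
  ((hφ.comp (continuous_realResolvent_symmetrize hz)).measurable.comp
    hX.measurable_fieldBlock).aestronglyMeasurable

theorem StatGauss.integrable_comp_realResolvent (hX : StatGauss P X) (hz : 0 < z.im)
    {φ : Matrix (Fin N) (Fin N) ℂ → ℂ} (hφ : Continuous φ) :
    Integrable (fun ω => φ (realResolvent (scaledW X N ω) z)) P := by
  have := (hX.hasGaussianLaw_fieldBlock N).isProbabilityMeasure
  obtain ⟨C, hC⟩ := exists_norm_comp_realResolvent_le hz hφ
  exact .of_bound (hX.aestronglyMeasurable_comp_realResolvent hz.ne' hφ) C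
    (ae_of_all _ fun ω => hC _ (isHermitian_scaledW X N ω))

theorem StatGauss.integrable_scaledW_mul_comp_realResolvent (hX : StatGauss P X) (hz : 0 < z.im)
    {φ : Matrix (Fin N) (Fin N) ℂ → ℂ} (hφ : Continuous φ) (j k : Fin N) :
    Integrable (fun ω => (scaledW X N ω j k : ℂ) * φ (realResolvent (scaledW X N ω) z)) P := by
  have := (hX.hasGaussianLaw_fieldBlock N).isProbabilityMeasure
  obtain ⟨C, hC⟩ := exists_norm_comp_realResolvent_le hz hφ
  exact ((hX.memLp_two_scaledW j k).integrable one_le_two).ofReal.mul_bdd (c := C)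
    (hX.aestronglyMeasurable_comp_realResolvent hz.ne' hφ)
    (ae_of_all _ fun ω => hC _ (isHermitian_scaledW X N ω))

theorem StatGauss.norm_integral_sdDefect_le [NeZero N] (hX : StatGauss P X)
    (hc : HasDiagonalCovariance P X c) (hz : 0 < z.im) (u : ℤ) :
    ‖∫ ω, sdDefect (Finset.Icc (-N) N) c z (lagTrace X N z ω) u ∂P‖
      ≤ (6 + 2 * |(u : ℝ)|) * z.im⁻¹ ^ 3 * ((N : ℝ)⁻¹ * ∑ v ∈ Finset.Icc (-N : ℤ) N, |c v|) := by
  have := (hX.hasGaussianLaw_fieldBlock N).isProbabilityMeasure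
  let G (ω : Ω) : Matrix (Fin N) (Fin N) ℂ := realResolvent (scaledW X N ω) z
  let H (j k : Fin N) (ω : Ω) : ℂ := (scaledW X N ω j k : ℂ) *
    (conj (shiftTrace (G ω) u) * (G ω * shiftMatrix N u : Matrix (Fin N) (Fin N) ℂ) k j)
  let S (j k : Fin N) (ω : Ω) : ℂ := sdIntegrand (G ω) (covDirection c j k) u j k
  let D (ω : Ω) : ℂ := sdDefect (Finset.Icc (-N) N) c z (lagTrace X N z ω) u
  have hD : Integrable D P :=
    hX.integrable_comp_realResolvent hz (continuous_sdDefect_shiftTrace _ c z u)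
  have hH (j k : Fin N) : Integrable (H j k) P :=
    hX.integrable_scaledW_mul_comp_realResolvent hz (continuous_conj_shiftTrace_mul u j k) j k
  have hS (j k : Fin N) : Integrable (S j k) P :=
    hX.integrable_comp_realResolvent hz (continuous_sdIntegrand _ u j k)
  have hSH (j k : Fin N) : Integrable (fun ω => S j k ω - H j k ω) P := (hS j k).sub (hH j k)
  have hSH_sum (j : Fin N) : Integrable (fun ω => ∑ k, (S j k ω - H j k ω)) P :=
    integrable_finsetSum _ fun k _ => hSH j k
  have hibp : ∫ ω, (N : ℂ)⁻¹ * ∑ j, ∑ k, (S j k ω - H j k ω) ∂P = 0 := by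
    rw [integral_const_mul, integral_finsetSum _ fun j _ => hSH_sum j,
      Finset.sum_eq_zero fun j _ => ?_, mul_zero]
    rw [integral_finsetSum _ fun k _ => hSH j k, Finset.sum_eq_zero fun k _ => ?_]
    rw [integral_sub (hS j k) (hH j k), sub_eq_zero]
    exact (hX.integral_scaledW_mul_eq_integral_sdIntegrand hc hz u j k).symm
  rw [← zero_add (∫ ω, D ω ∂P), ← hibp, ← integral_add
    ((integrable_finsetSum _ fun j _ => hSH_sum j).const_mul _) hD]
  refine (norm_integral_le_of_norm_le_const (ae_of_all _ fun ω => ?_)).trans_eq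
    (by rw [probReal_univ, mul_one])
  refine (congrArg norm ?_).trans_le (norm_sum_sum_sdIntegrand_covDirection_sub_le
    (transpose_realResolvent (isHermitian_scaledW X N ω))
      (norm_realResolvent_le (isHermitian_scaledW X N ω) hz) c u)
  simp only [D, S, H, G, lagTrace, sdDefect, mul_sub, Finset.sum_sub_distrib]
  rw [← conj_shiftTrace_mul_realResolvent_eq (isHermitian_scaledW X N ω) hz.ne']
  ring

end SchwingerDysonEquation

section SelfConsistentEquation

theorem tendsto_inv_mul_sum_Icc_abs {c : ℤ → ℝ} (hc : Tendsto c cofinite (nhds 0)) :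
    Tendsto (fun N : ℕ => (N : ℝ)⁻¹ * ∑ v ∈ Finset.Icc (-N : ℤ) N, |c v|) atTop (nhds 0) := by
  have hsum (N : ℕ) : ∑ v ∈ Finset.Icc (-N : ℤ) N, |c v| =
      |c 0| + ∑ n ∈ Finset.range N, (|c (n + 1)| + |c (-(n + 1))|) := by
    induction N with
    | zero => simp
    | succ N ih =>
      rw [Finset.sum_range_succ, ← add_assoc, ← ih]
      push_cast
      rw [Finset.sum_Icc_succ_eq_add_endpoints]
      ring
  have hpos {e : ℕ → ℤ} (he : e.Injective) : Tendsto (fun n => |c (e n)|) atTop (nhds 0) := by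
    rw [← Nat.cofinite_eq_atTop]
    simpa using (hc.comp he.tendsto_cofinite).abs
  have hcesaro := ((hpos (e := fun n => n + 1) fun _ _ h => by simpa using h).add
    (hpos (e := fun n => -(n + 1)) fun _ _ h => by simpa using h)).cesaro
  have hzero := (tendsto_inv_atTop_nhds_zero_nat (𝕜 := ℝ)).mul_const |c 0|
  simpa [hsum, mul_add] using hzero.add hcesaro

variable {Ω : Type*} [MeasurableSpace Ω] {P : Measure Ω} {X : ℤ → ℤ → Ω → ℝ} {c : ℤ → ℝ}
  {N : ℕ} {z : ℂ}

theorem StatGauss.tendsto_integral_sdDefect (hX : StatGauss P X) (hc : HasDiagonalCovariance P X c)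
    (hc0 : Tendsto c cofinite (nhds 0)) (hz : 0 < z.im) (u : ℤ) :
    Tendsto (fun N : ℕ => ∫ ω, sdDefect (Finset.Icc (-N) N) c z
      (lagTrace X N z ω) u ∂P) atTop (nhds 0) := by
  refine squeeze_zero_norm' ?_ (by simpa only [mul_zero] using
    (tendsto_inv_mul_sum_Icc_abs hc0).const_mul ((6 + 2 * |(u : ℝ)|) * z.im⁻¹ ^ 3))
  filter_upwards [eventually_ne_atTop 0] with N hN
  have : NeZero N := ⟨hN⟩
  exact hX.norm_integral_sdDefect_le hc hz u

/-- The defect of the semicircle equation `γ s² - z s + 1 = 0`, paired with `conj s`. -/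
def semicircleDefect (γ : ℝ) (z s : ℂ) : ℂ :=
  conj s * (z * s - 1 - γ * s ^ 2)

theorem continuous_semicircleDefect (γ : ℝ) (z : ℂ) : Continuous (semicircleDefect γ z) := by
  unfold semicircleDefect
  fun_prop

theorem toeplitzBound_shiftTrace {A : Matrix (Fin N) (Fin N) ℂ} {g : ℝ} (hA : ‖A‖ ≤ g) :
    ToeplitzBound (shiftTrace A) g :=
  fun I J a b => (norm_toeplitz_form_le A I J a b).trans (by gcongr)

theorem StatGauss.norm_integral_semicircleDefect_le (hX : StatGauss P X)
    (hcmax : ∀ v, |c v| ≤ c 0) {J : Finset ℤ} (hJ : 0 ∉ J) {δ : ℝ} (hδ : 0 ≤ δ)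
    (hcδ : ∀ v ∉ J, v ≠ 0 → |c v| ≤ δ) (hz : 0 < z.im) (hzc : 4 * c 0 * z.im⁻¹ < z.im) :
    ‖∫ ω, semicircleDefect (2 * c 0) z (lagTrace X N z ω 0) ∂P -
        ∫ ω, sdDefect (Finset.Icc (-N) N) c z (lagTrace X N z ω) 0 ∂P‖
      ≤ 2 * z.im⁻¹ * (c 0 * ((z.im - 4 * c 0 * z.im⁻¹)⁻¹ *
          ((∑ u ∈ J, ∫ ω, sdDefect (Finset.Icc (-N) N) c z
            (lagTrace X N z ω) u ∂P).im + 2 * z.im⁻¹ ^ 3 * δ)) +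
              δ * z.im⁻¹ ^ 2) := by
  have := (hX.hasGaussianLaw_fieldBlock N).isProbabilityMeasure
  have hD (u : ℤ) : Integrable (fun ω => sdDefect (Finset.Icc (-N) N) c z
      (lagTrace X N z ω) u) P :=
    hX.integrable_comp_realResolvent hz (continuous_sdDefect_shiftTrace _ c z u)
  have hq : Integrable (fun ω => semicircleDefect (2 * c 0) z
      (lagTrace X N z ω 0)) P :=
    hX.integrable_comp_realResolvent hz
      ((continuous_semicircleDefect _ z).comp (continuous_shiftTrace 0))
  have hDJ : Integrable (fun ω => ∑ u ∈ J, sdDefect (Finset.Icc (-N) N) c z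
      (lagTrace X N z ω) u) P := integrable_finsetSum _ fun u _ => hD u
  rw [← integral_sub hq (hD 0), ← integral_finsetSum _ fun u _ => hD u]
  have him := (Complex.imCLM.integral_comp_comm hDJ).symm
  simp only [Complex.imCLM_apply] at him
  have hDJ_im : Integrable (fun ω =>
      (∑ u ∈ J, sdDefect (Finset.Icc (-N) N) c z (lagTrace X N z ω) u).im) P := hDJ.im
  have hbound : ∀ᵐ ω ∂P, ‖semicircleDefect (2 * c 0) z (lagTrace X N z ω 0) -
      sdDefect (Finset.Icc (-N) N) c z (lagTrace X N z ω) 0‖ ≤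
      2 * z.im⁻¹ * (c 0 * ((z.im - 4 * c 0 * z.im⁻¹)⁻¹ *
        ((∑ u ∈ J, sdDefect (Finset.Icc (-N) N) c z (lagTrace X N z ω) u).im +
          2 * z.im⁻¹ ^ 3 * δ)) + δ * z.im⁻¹ ^ 2) := by
    refine ae_of_all _ fun ω => ?_
    have hA := isHermitian_scaledW X N ω
    have hT : ToeplitzBound (lagTrace X N z ω) z.im⁻¹ :=
      toeplitzBound_shiftTrace (norm_realResolvent_le hA hz)
    simpa [semicircleDefect] using hT.norm_quadratic_sub_sdDefect_le (inv_pos.2 hz)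
      (shiftTrace_neg (transpose_realResolvent hA)) (by simp) hJ hcmax hδ hcδ hzc
  refine (norm_integral_le_of_norm_le (by fun_prop) hbound).trans_eq ?_
  rw [integral_const_mul, integral_add (by fun_prop) (integrable_const _), integral_const_mul,
    integral_const_mul, integral_add hDJ_im (integrable_const _), him]
  simp

theorem exists_finset_abs_le_of_tendsto_cofinite {ι : Type*} {c : ι → ℝ}
    (hc : Tendsto c cofinite (nhds 0)) (i₀ : ι) {δ : ℝ} (hδ : 0 < δ) :
    ∃ J : Finset ι, i₀ ∉ J ∧ ∀ i ∉ J, i ≠ i₀ → |c i| ≤ δ := by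
  classical
  have hsmall : ∀ᶠ i in cofinite, |c i| < δ := hc.abs.eventually_lt_const (by simpa using hδ)
  have hlarge : {i | ¬|c i| < δ}.Finite := eventually_cofinite.1 hsmall
  refine ⟨hlarge.toFinset.erase i₀, Finset.notMem_erase i₀ _, fun i hi hi₀ => ?_⟩
  by_contra h
  exact hi (Finset.mem_erase.2 ⟨hi₀, hlarge.mem_toFinset.2 fun h' => h h'.le⟩)

theorem StatGauss.tendsto_integral_semicircleDefect (hX : StatGauss P X)
    (hc : HasDiagonalCovariance P X c) (hc0 : Tendsto c cofinite (nhds 0))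
    (hcmax : ∀ v, |c v| ≤ c 0) (hz : 0 < z.im) (hzc : 4 * c 0 * z.im⁻¹ < z.im) :
    Tendsto (fun N : ℕ => ∫ ω, semicircleDefect (2 * c 0) z
      (lagTrace X N z ω 0) ∂P) atTop (nhds 0) := by
  set g := z.im⁻¹
  set κ := (z.im - 4 * c 0 * g)⁻¹
  set K := 2 * g * (c 0 * (κ * (2 * g ^ 3)) + g ^ 2)
  have hc0_nonneg : 0 ≤ c 0 := (abs_nonneg _).trans (hcmax 0)
  have _ : 0 < g := inv_pos.2 hz
  have _ : 0 < κ := inv_pos.2 (sub_pos.2 hzc)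
  have _ : 0 ≤ K := by positivity
  have hD := hX.tendsto_integral_sdDefect hc hc0 hz
  rw [Metric.tendsto_nhds]
  intro ε hε
  obtain ⟨δ, hδ, hδε⟩ : ∃ δ > 0, K * δ < ε :=
    ⟨ε / (K + 1), by positivity, by rw [← mul_div_assoc, div_lt_iff₀ (by positivity)]; nlinarith⟩
  obtain ⟨J, hJ, hcδ⟩ := exists_finset_abs_le_of_tendsto_cofinite hc0 0 hδ
  have hlim : Tendsto (fun N : ℕ =>
      ‖∫ ω, sdDefect (Finset.Icc (-N) N) c z (lagTrace X N z ω) 0 ∂P‖ +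
        2 * g * (c 0 * (κ * ((∑ u ∈ J, ∫ ω, sdDefect (Finset.Icc (-N) N) c z
          (lagTrace X N z ω) u ∂P).im + 2 * g ^ 3 * δ)) + δ * g ^ 2)) atTop (nhds (K * δ)) := by
    have hJ_lim : Tendsto (fun N : ℕ => (∑ u ∈ J, ∫ ω, sdDefect (Finset.Icc (-N) N) c z
        (lagTrace X N z ω) u ∂P).im) atTop (nhds 0) := by
      simpa [Function.comp_def] using
        (Complex.continuous_im.tendsto _).comp (tendsto_finsetSum J fun u _ => hD u)
    convert (hD 0).norm.add ((((hJ_lim.add_const (2 * g ^ 3 * δ)).const_mul κ).const_mul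
      (c 0)).add_const (δ * g ^ 2) |>.const_mul (2 * g)) using 2
    simp only [norm_zero, K]
    ring
  filter_upwards [hlim.eventually_lt_const hδε] with N hN
  rw [dist_zero_right]
  refine lt_of_le_of_lt ?_ hN
  have h := hX.norm_integral_semicircleDefect_le (N := N) hcmax hJ hδ.le hcδ hz hzc
  exact (norm_le_norm_add_norm_sub' _ _).trans (add_le_add_right h _)

end SelfConsistentEquation

section Semicircle

variable {γ : ℝ}

theorem WSL_eq_withDensity_indicator (γ : ℝ) :
    WSL γ = volume.withDensity fun x => ENNReal.ofReal ((Set.Icc (-(2 * √γ)) (2 * √γ)).indicator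
      (fun x => (2 * π * √γ)⁻¹ * √(4 - x ^ 2 / γ)) x) := by
  simp only [WSL, Set.indicator, Set.mem_Icc, abs_le]

theorem isFiniteMeasure_WSL (γ : ℝ) : IsFiniteMeasure (WSL γ) := by
  rw [WSL_eq_withDensity_indicator]
  refine isFiniteMeasure_withDensity_ofReal (Integrable.hasFiniteIntegral ?_)
  rw [integrable_indicator_iff measurableSet_Icc]
  exact (Continuous.continuousOn (by fun_prop)).integrableOn_compact isCompact_Icc

theorem integral_WSL (hγ : 0 < γ) {F : ℝ → ℂ} (hF : Continuous F) :
    ∫ x, F x ∂WSL γ = 2 / π * ∫ θ in 0..π, (sin θ : ℂ) ^ 2 * F (2 * √γ * cos θ) := by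
  have hr : 0 < √γ := sqrt_pos.2 hγ
  set ρ : ℝ → ℝ := fun x => (2 * π * √γ)⁻¹ * √(4 - x ^ 2 / γ) with hρ
  have hdensity (θ : ℝ) (hθ : θ ∈ Set.uIcc 0 π) :
      ρ (2 * √γ * cos θ) = (π * √γ)⁻¹ * sin θ := by
    rw [Set.uIcc_of_le pi_pos.le] at hθ
    have hsin := sin_nonneg_of_mem_Icc hθ
    have hsq : 4 - (2 * √γ * cos θ) ^ 2 / γ = (2 * sin θ) ^ 2 := by
      rw [mul_pow, mul_pow, sq_sqrt hγ.le, mul_pow, sin_sq]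
      field
    rw [hρ]
    dsimp only
    rw [hsq, sqrt_sq (by positivity)]
    field
  have hsubst := intervalIntegral.integral_deriv_smul_comp (a := 0) (b := π)
    (f := fun θ => 2 * √γ * cos θ) (g := fun x => ρ x • F x)
    (fun θ _ => (hasDerivAt_cos θ).const_mul _) (by fun_prop) (by fun_prop)
  rw [cos_zero, cos_pi, mul_one, mul_neg_one] at hsubst
  calc ∫ x, F x ∂WSL γ = ∫ x, (Set.Icc (-(2 * √γ)) (2 * √γ)).indicator (fun x => ρ x • F x) x := by
        rw [WSL_eq_withDensity_indicator, integral_withDensity_eq_integral_toReal_smul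
          ((by fun_prop : Measurable ρ).indicator measurableSet_Icc).ennreal_ofReal (by simp)]
        refine integral_congr_ae (ae_of_all _ fun x => ?_)
        dsimp only
        rw [ENNReal.toReal_ofReal (Set.indicator_nonneg (fun y _ => by positivity) x)]
        exact (congrFun (Set.indicator_smul_left _ ρ F) x).symm
    _ = ∫ x in -(2 * √γ)..2 * √γ, ρ x • F x := by
        rw [integral_indicator measurableSet_Icc, integral_Icc_eq_integral_Ioc,
          intervalIntegral.integral_of_le (by linarith)]
    _ = 2 / π * ∫ θ in 0..π, (sin θ : ℂ) ^ 2 * F (2 * √γ * cos θ) := by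
        rw [intervalIntegral.integral_symm, ← hsubst, ← intervalIntegral.integral_neg,
          ← intervalIntegral.integral_const_mul]
        refine intervalIntegral.integral_congr fun θ hθ => ?_
        have hr' : (√γ : ℂ) ≠ 0 := Complex.ofReal_ne_zero.2 hr.ne'
        simp only [Function.comp, hdensity θ hθ, Complex.real_smul]
        push_cast
        field

theorem one_sub_mul_ne_zero {q w : ℂ} (hq : ‖q‖ < 1) (hw : ‖w‖ ≤ 1) : 1 - q * w ≠ 0 := by
  intro h
  have hnorm := congrArg norm (sub_eq_zero.1 h)
  rw [norm_one, norm_mul] at hnorm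
  nlinarith [norm_nonneg q, norm_nonneg w]

theorem sin_sq_div_eq_add {q : ℂ} (hq : ‖q‖ < 1) (θ : ℝ) :
    (sin θ : ℂ) ^ 2 / (1 - 2 * q * cos θ + q ^ 2) =
      -(1 / 4) * ((circleMap 0 1 θ ^ 2 - 1) / (1 - q * circleMap 0 1 θ) +
        (circleMap 0 1 (-θ) ^ 2 - 1) / (1 - q * circleMap 0 1 (-θ))) := by
  have hne (φ : ℝ) : 1 - q * circleMap 0 1 φ ≠ 0 := one_sub_mul_ne_zero hq (by simp)
  have hcos : (cos θ : ℂ) = (circleMap 0 1 θ + circleMap 0 1 (-θ)) / 2 := by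
    simp [circleMap, Complex.cos]
  have hsin : (sin θ : ℂ) = (circleMap 0 1 θ - circleMap 0 1 (-θ)) / (2 * Complex.I) := by
    simp only [circleMap, Complex.ofReal_sin, Complex.sin]
    push_cast
    field_simp
    linear_combination (Complex.exp (-(θ * Complex.I)) - Complex.exp (θ * Complex.I)) * Complex.I_sq
  have hinv : circleMap 0 1 θ * circleMap 0 1 (-θ) = 1 := by
    simp [circleMap, ← Complex.exp_add]
  set w := circleMap 0 1 θ
  set w' := circleMap 0 1 (-θ)
  have hfactor : 1 - 2 * q * cos θ + q ^ 2 = (1 - q * w) * (1 - q * w') := by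
    rw [hcos]
    linear_combination -q ^ 2 * hinv
  have hsin_sq : (sin θ : ℂ) ^ 2 = -(1 / 4) * (w - w') ^ 2 := by
    rw [hsin, div_pow, mul_pow, Complex.I_sq]
    ring
  rw [hfactor, hsin_sq, div_add_div _ _ (hne θ) (hne (-θ)), ← mul_div_assoc]
  congr 1
  linear_combination (2 - w * q - w' * q) * (1 / 4) * hinv

theorem integral_sin_sq_div {q : ℂ} (hq : ‖q‖ < 1) :
    ∫ θ in 0..π, (sin θ : ℂ) ^ 2 / (1 - 2 * q * cos θ + q ^ 2) = (π : ℂ) / 2 := by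
  set f : ℂ → ℂ := fun w => (w ^ 2 - 1) / (1 - q * w)
  have hne {w : ℂ} (hw : ‖w‖ ≤ 1) : 1 - q * w ≠ 0 := one_sub_mul_ne_zero hq hw
  have hmean : circleAverage f 0 1 = -1 := by
    rw [DiffContOnCl.circleAverage]
    · simp [f]
    · rw [abs_one]
      refine DifferentiableOn.diffContOnCl_ball (U := Metric.closedBall 0 1) ?_ subset_rfl
      exact .div (by fun_prop) (by fun_prop) fun w hw => hne (by simpa using hw)
  have hcont : Continuous fun θ => f (circleMap 0 1 θ) :=
    .div (by fun_prop) (by fun_prop) fun θ => hne (by simp)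
  have hint {a b : ℝ} : IntervalIntegrable (fun θ => f (circleMap 0 1 θ)) volume a b :=
    hcont.intervalIntegrable a b
  have hint_neg : IntervalIntegrable (fun θ => f (circleMap 0 1 (-θ))) volume 0 π :=
    (hcont.comp continuous_neg).intervalIntegrable 0 π
  have hperiodic : Function.Periodic (fun θ => f (circleMap 0 1 θ)) (2 * π) :=
    (periodic_circleMap 0 1).comp f
  calc ∫ θ in 0..π, (sin θ : ℂ) ^ 2 / (1 - 2 * q * cos θ + q ^ 2)
      = -(1 / 4) * ((∫ θ in 0..π, f (circleMap 0 1 θ)) + ∫ θ in 0..π, f (circleMap 0 1 (-θ))) := by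
        rw [← intervalIntegral.integral_add hint hint_neg, ← intervalIntegral.integral_const_mul]
        simp only [sin_sq_div_eq_add hq, f]
    _ = -(1 / 4) * ∫ θ in -π..π, f (circleMap 0 1 θ) := by
        rw [intervalIntegral.integral_comp_neg (fun θ => f (circleMap 0 1 θ)), neg_zero, add_comm,
          intervalIntegral.integral_add_adjacent_intervals hint hint]
    _ = -(1 / 4) * (2 * π * circleAverage f 0 1) := by
        have hshift := hperiodic.intervalIntegral_add_eq (-π) 0
        rw [show -π + 2 * π = π by ring, zero_add] at hshift
        rw [hshift, circleAverage, Complex.real_smul]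
        push_cast
        field
    _ = π / 2 := by
        rw [hmean]
        ring

theorem sub_ofReal_ne_zero {z : ℂ} (hz : z.im ≠ 0) (x : ℝ) : z - x ≠ 0 :=
  fun h => hz (by simpa using congrArg Complex.im h)

theorem norm_inv_sub_ofReal_le {z : ℂ} (hz : 0 < z.im) (x : ℝ) : ‖(z - x)⁻¹‖ ≤ z.im⁻¹ := by
  rw [norm_inv]
  exact inv_anti₀ hz (by simpa using (le_abs_self _).trans (Complex.abs_im_le_norm (z - x)))

theorem continuous_inv_sub_ofReal {z : ℂ} (hz : z.im ≠ 0) :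
    Continuous fun x : ℝ => (z - x)⁻¹ :=
  .inv₀ (by fun_prop) (sub_ofReal_ne_zero hz)

theorem integrable_inv_sub_ofReal (μ : Measure ℝ) [IsFiniteMeasure μ] {z : ℂ} (hz : 0 < z.im) :
    Integrable (fun x : ℝ => (z - x)⁻¹) μ :=
  .of_bound (continuous_inv_sub_ofReal hz.ne').aestronglyMeasurable z.im⁻¹
    (ae_of_all _ (norm_inv_sub_ofReal_le hz))

/-- The Stieltjes transform `∫ (z - x)⁻¹ dμ(x)`, with the sign for which it is asymptotic to
`μ(ℝ) / z` at infinity. -/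
def stieltjes (μ : Measure ℝ) (z : ℂ) : ℂ :=
  ∫ x : ℝ, (z - x)⁻¹ ∂μ

theorem norm_stieltjes_le (μ : Measure ℝ) [IsProbabilityMeasure μ] {z : ℂ} (hz : 0 < z.im) :
    ‖stieltjes μ z‖ ≤ z.im⁻¹ := by
  simpa [stieltjes] using
    norm_integral_le_of_norm_le_const (μ := μ) (ae_of_all _ (norm_inv_sub_ofReal_le hz))

theorem stieltjes_ne_zero (μ : Measure ℝ) [IsFiniteMeasure μ] [NeZero μ] {z : ℂ}
    (hz : 0 < z.im) : stieltjes μ z ≠ 0 := by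
  have hneg (x : ℝ) : 0 < -((z - x)⁻¹).im := by
    rw [Complex.inv_im, neg_div, neg_neg]
    exact div_pos (by simpa using hz) (Complex.normSq_pos.2 (sub_ofReal_ne_zero hz.ne' x))
  have hint := integrable_inv_sub_ofReal μ hz
  have him : (stieltjes μ z).im = ∫ x : ℝ, ((z - x)⁻¹).im ∂μ := (integral_im hint).symm
  have hpos : 0 < ∫ x : ℝ, -((z - x)⁻¹).im ∂μ := by
    rw [integral_pos_iff_support_of_nonneg (fun x => (hneg x).le) hint.im.neg,
      Function.support_eq_univ fun x => (hneg x).ne']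
    exact NeZero.pos _
  rw [integral_neg, ← him] at hpos
  intro h
  simp [h] at hpos

theorem stieltjes_WSL (hγ : 0 < γ) {z s : ℂ} (hz : z.im ≠ 0) (hs : γ * s ^ 2 - z * s + 1 = 0)
    (hs_norm : ‖√γ * s‖ < 1) : stieltjes (WSL γ) z = s := by
  have hs0 : s ≠ 0 := by
    rintro rfl
    simp at hs
  have _ : (√γ : ℂ) ≠ 0 := Complex.ofReal_ne_zero.2 (sqrt_pos.2 hγ).ne'
  have hr_sq : (√γ : ℂ) ^ 2 = γ := by
    rw [← Complex.ofReal_pow, sq_sqrt hγ.le]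
  have hdenom (x : ℂ) : s * (z - 2 * √γ * x) = 1 - 2 * (√γ * s) * x + (√γ * s) ^ 2 := by
    linear_combination -hs - s ^ 2 * hr_sq
  have hintegrand (θ : ℝ) : (sin θ : ℂ) ^ 2 * (z - (2 * √γ * cos θ : ℝ))⁻¹ =
      s * ((sin θ : ℂ) ^ 2 / (1 - 2 * (√γ * s) * cos θ + (√γ * s) ^ 2)) := by
    rw [← hdenom]
    push_cast
    field_simp
  have hπ : (π : ℂ) ≠ 0 := Complex.ofReal_ne_zero.2 pi_ne_zero
  rw [stieltjes, integral_WSL hγ (continuous_inv_sub_ofReal hz)]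
  simp only [hintegrand]
  rw [intervalIntegral.integral_const_mul, integral_sin_sq_div hs_norm]
  field

end Semicircle

section StieltjesUniqueness

open scoped FourierTransform

/-- The function `ξ ↦ e^{-ηξ} φ_μ(-ξ)` on `ξ > 0`, extended by `0`. Its Fourier transform is the
Stieltjes transform of `μ` on the line `Im z = η`, up to rescaling. -/
def dampedCharFun (μ : Measure ℝ) (η : ℝ) : ℝ → ℂ :=
  (Set.Ioi 0).indicator fun ξ => Complex.exp (-(η * ξ)) * charFun μ (-ξ)

theorem eq_of_fourier_eq {V E : Type*} [NormedAddCommGroup V] [InnerProductSpace ℝ V]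
    [FiniteDimensional ℝ V] [MeasurableSpace V] [BorelSpace V] [NormedAddCommGroup E]
    [NormedSpace ℂ E] [CompleteSpace E] {f g : V → E} (hf : Integrable f) (hg : Integrable g)
    (h : 𝓕 f = 𝓕 g) {x : V} (hfx : ContinuousAt f x) (hgx : ContinuousAt g x) : f x = g x := by
  have hfourier : 𝓕 (f - g) = 0 := by
    ext w
    have hw := congrFun h w
    simp only [Real.fourier_eq] at hw ⊢
    simp only [Pi.sub_apply, smul_sub]
    rw [integral_sub ((Real.fourierIntegral_convergent_iff w).2 hf)
      ((Real.fourierIntegral_convergent_iff w).2 hg), hw, sub_self, Pi.zero_apply]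
  have hinv :=
    (hf.sub hg).fourierInv_fourier_eq (hfourier ▸ integrable_zero V E volume) (hfx.sub hgx)
  rw [hfourier] at hinv
  simpa [Real.fourierInv_eq, sub_eq_zero, eq_comm] using hinv

variable {μ ν : Measure ℝ} [IsFiniteMeasure μ] [IsFiniteMeasure ν] {η : ℝ}

theorem integrable_dampedCharFun (μ : Measure ℝ) [IsFiniteMeasure μ] (hη : 0 < η) :
    Integrable (dampedCharFun μ η) := by
  rw [dampedCharFun, integrable_indicator_iff measurableSet_Ioi]
  have hexp : IntegrableOn (fun ξ : ℝ => Complex.exp (-(η * ξ))) (Set.Ioi 0) := by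
    simpa using integrableOn_exp_mul_complex_Ioi (a := -η) (by simpa using hη) 0
  exact hexp.mul_bdd
    (continuous_charFun.comp continuous_neg).aestronglyMeasurable
    (ae_of_all _ fun ξ => norm_charFun_le (-ξ))

theorem continuousAt_dampedCharFun {ξ : ℝ} (hξ : 0 < ξ) : ContinuousAt (dampedCharFun μ η) ξ := by
  have hcont : Continuous fun ξ : ℝ => Complex.exp (-(η * ξ)) * charFun μ (-ξ) :=
    Continuous.mul (by fun_prop) (continuous_charFun.comp continuous_neg)
  refine hcont.continuousAt.congr ?_
  filter_upwards [Ioi_mem_nhds hξ] with ξ hξ using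
    (Set.indicator_of_mem hξ fun ξ : ℝ => Complex.exp (-(η * ξ)) * charFun μ (-ξ)).symm

theorem fourier_dampedCharFun (μ : Measure ℝ) [IsFiniteMeasure μ] (hη : 0 < η) (w : ℝ) :
    𝓕 (dampedCharFun μ η) w = Complex.I * stieltjes μ (-2 * π * w + η * Complex.I) := by
  set z : ℂ := -2 * π * w + η * Complex.I
  have hz : z.im = η := by simp [z]
  have hexp (ξ t : ℝ) : Complex.exp (Complex.I * (z - t) * ξ) =
      Complex.exp (↑(-2 * π * ξ * w) * Complex.I) *
        (Complex.exp (-(η * ξ)) * Complex.exp (-ξ * t * Complex.I)) := by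
    simp only [← Complex.exp_add, z]
    congr 1
    push_cast
    linear_combination (η * ξ : ℂ) * Complex.I_sq
  have hnorm (ξ t : ℝ) : ‖Complex.exp (Complex.I * (z - t) * ξ)‖ = Real.exp (-η * ξ) := by
    simp [Complex.norm_exp, hz]
  have hint : Integrable (fun p : ℝ × ℝ => Complex.exp (Complex.I * (z - p.2) * p.1))
      ((volume.restrict (Set.Ioi 0)).prod μ) := by
    refine Integrable.mono' (g := fun p => Real.exp (-η * p.1)) ?_
      (Continuous.aestronglyMeasurable (by fun_prop)) (ae_of_all _ fun p => (hnorm p.1 p.2).le)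
    exact Integrable.comp_fst (f := fun ξ => Real.exp (-η * ξ)) (exp_neg_integrableOn_Ioi 0 hη) μ
  have hlaplace (t : ℝ) : ∫ ξ in Set.Ioi (0 : ℝ), Complex.exp (Complex.I * (z - t) * ξ) =
      Complex.I * (z - t)⁻¹ := by
    rw [integral_exp_mul_complex_Ioi (by simpa [hz] using hη)]
    simp [neg_div, mul_comm]
  calc 𝓕 (dampedCharFun μ η) w
      = ∫ ξ in Set.Ioi (0 : ℝ), ∫ t, Complex.exp (Complex.I * (z - t) * ξ) ∂μ := by
        rw [fourier_real_eq_integral_exp_smul, ← integral_indicator measurableSet_Ioi]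
        congr 1 with ξ
        by_cases hξ : ξ ∈ Set.Ioi 0
        · simp only [dampedCharFun, Set.indicator_of_mem hξ, charFun_apply_real, smul_eq_mul,
            ← integral_const_mul, hexp]
          push_cast
          rfl
        · simp [dampedCharFun, Set.indicator_of_notMem hξ]
    _ = ∫ t, Complex.I * (z - t)⁻¹ ∂μ := by
        rw [integral_integral_swap hint]
        simp only [hlaplace]
    _ = Complex.I * stieltjes μ z := integral_const_mul _ _

theorem ext_of_stieltjes (hη : 0 < η) (h : ∀ z : ℂ, z.im = η → stieltjes μ z = stieltjes ν z) :
    μ = ν := by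
  have hfourier : 𝓕 (dampedCharFun μ η) = 𝓕 (dampedCharFun ν η) := by
    ext w
    rw [fourier_dampedCharFun μ hη, fourier_dampedCharFun ν hη, h _ (by simp)]
  have hneg {ξ : ℝ} (hξ : 0 < ξ) : charFun μ (-ξ) = charFun ν (-ξ) := by
    have := eq_of_fourier_eq (integrable_dampedCharFun μ hη) (integrable_dampedCharFun ν hη)
      hfourier (continuousAt_dampedCharFun hξ) (continuousAt_dampedCharFun hξ)
    simpa only [dampedCharFun, Set.indicator_of_mem (Set.mem_Ioi.2 hξ),
      mul_right_inj' (Complex.exp_ne_zero _)] using this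
  refine Measure.ext_of_charFun (continuous_charFun.ext_on (dense_compl_singleton 0)
    continuous_charFun fun ξ hξ => ?_)
  rcases lt_or_gt_of_ne hξ with hξ | hξ
  · simpa using hneg (neg_pos.2 hξ)
  · exact (starRingEnd ℂ).injective (by simpa only [charFun_neg] using hneg hξ)

end StieltjesUniqueness

section SpectralLimit

theorem tendsto_integral_comp_of_tendstoInMeasure_const {Ω E F : Type*} [MeasurableSpace Ω]
    {P : Measure Ω} [IsProbabilityMeasure P] [NormedAddCommGroup E] [ProperSpace E]
    [NormedAddCommGroup F] [NormedSpace ℝ F] [CompleteSpace F] {f : ℕ → Ω → E} {s : E} {r : ℝ}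
    (hf : ∀ n, AEStronglyMeasurable (f n) P) (hr : ∀ n ω, ‖f n ω‖ ≤ r)
    (h : TendstoInMeasure P f atTop fun _ => s) {φ : E → F} (hφ : Continuous φ) :
    Tendsto (fun n => ∫ ω, φ (f n ω) ∂P) atTop (nhds (φ s)) := by
  obtain ⟨C, hC⟩ := (isCompact_closedBall (0 : E) r).exists_bound_of_continuousOn hφ.continuousOn
  refine tendsto_of_subseq_tendsto fun ns hns => ?_
  obtain ⟨ms, -, hms⟩ := (h.comp hns).exists_seq_tendsto_ae
  refine ⟨ms, ?_⟩
  have hlim : Tendsto (fun n => ∫ ω, φ (f (ns (ms n)) ω) ∂P) atTop (nhds (∫ _, φ s ∂P)) := by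
    refine tendsto_integral_of_dominated_convergence (fun _ => C)
      (fun n => hφ.comp_aestronglyMeasurable (hf _)) (integrable_const C)
      (fun n => ae_of_all _ fun ω => hC _ (mem_closedBall_zero_iff.2 (hr _ ω))) ?_
    filter_upwards [hms] with ω hω using (hφ.tendsto s).comp hω
  simpa using hlim

variable {Ω : Type*} {z : ℂ}

theorem lagTrace_zero (X : ℤ → ℤ → Ω → ℝ) (N : ℕ) (hz : z.im ≠ 0) (ω : Ω) :
    lagTrace X N z ω 0 = Complex.mk (esdEval (scaledW X N ω) fun x => ((z - x)⁻¹).re)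
      (esdEval (scaledW X N ω) fun x => ((z - x)⁻¹).im) := by
  have hA := isHermitian_scaledW X N ω
  have htrace : lagTrace X N z ω 0 = ((N : ℝ)⁻¹ : ℝ) * ∑ i, (z - hA.eigenvalues i)⁻¹ := by
    simp [lagTrace, shiftTrace, shiftMatrix_zero, trace_realResolvent hA hz]
  rw [htrace, esdEval, esdEval, dif_pos hA, dif_pos hA]
  apply Complex.ext
  · rw [Complex.re_ofReal_mul, Complex.re_sum]
  · rw [Complex.im_ofReal_mul, Complex.im_sum]

theorem norm_lagTrace_le (X : ℤ → ℤ → Ω → ℝ) (N : ℕ) (hz : 0 < z.im) (ω : Ω) (u : ℤ) :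
    ‖lagTrace X N z ω u‖ ≤ z.im⁻¹ :=
  (norm_shiftTrace_le _ u).trans (norm_realResolvent_le (isHermitian_scaledW X N ω) hz)

variable [MeasurableSpace Ω] {P : Measure Ω} {X : ℤ → ℤ → Ω → ℝ} {c : ℤ → ℝ} {μ : Measure ℝ}

theorem ESDTendstoInProb.tendstoInMeasure_lagTrace_zero [IsFiniteMeasure μ]
    (hconv : ESDTendstoInProb P (scaledW X) μ) (hz : 0 < z.im) :
    TendstoInMeasure P (fun N ω => lagTrace X N z ω 0) atTop fun _ => stieltjes μ z := by
  have hcont := continuous_inv_sub_ofReal hz.ne'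
  have hint := integrable_inv_sub_ofReal μ hz
  rw [tendstoInMeasure_iff_norm]
  intro ε hε
  have hre := hconv (fun x => ((z - x)⁻¹).re) (Complex.continuous_re.comp hcont)
    ⟨z.im⁻¹, fun x => (Complex.abs_re_le_norm _).trans (norm_inv_sub_ofReal_le hz x)⟩
    (ε / 2) (half_pos hε)
  have him := hconv (fun x => ((z - x)⁻¹).im) (Complex.continuous_im.comp hcont)
    ⟨z.im⁻¹, fun x => (Complex.abs_im_le_norm _).trans (norm_inv_sub_ofReal_le hz x)⟩
    (ε / 2) (half_pos hε)
  refine tendsto_of_tendsto_of_tendsto_of_le_of_le tendsto_const_nhds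
    (by simpa only [add_zero] using hre.add him) (fun _ => zero_le) fun N =>
      (measure_mono fun ω hω => ?_).trans (measure_union_le _ _)
  have hre_eq : ∫ x : ℝ, ((z - x)⁻¹).re ∂μ = (stieltjes μ z).re := integral_re hint
  have him_eq : ∫ x : ℝ, ((z - x)⁻¹).im ∂μ = (stieltjes μ z).im := integral_im hint
  have hnorm := hω.trans (Complex.norm_le_abs_re_add_abs_im _)
  simp only [lagTrace_zero X N hz.ne', Complex.sub_re, Complex.sub_im] at hnorm
  simp only [Set.mem_union, Set.mem_ofPred_eq, hre_eq, him_eq]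
  by_contra! hlt
  linarith [hlt.1, hlt.2]

theorem StatGauss.semicircle_equation_stieltjes [IsProbabilityMeasure μ] (hX : StatGauss P X)
    (hc : HasDiagonalCovariance P X c) (hc0 : Tendsto c cofinite (nhds 0))
    (hcmax : ∀ v, |c v| ≤ c 0) (hconv : ESDTendstoInProb P (scaledW X) μ) (hz : 0 < z.im)
    (hzc : 4 * c 0 * z.im⁻¹ < z.im) :
    ((2 * c 0 : ℝ) : ℂ) * stieltjes μ z ^ 2 - z * stieltjes μ z + 1 = 0 := by
  have := (hX.hasGaussianLaw_fieldBlock 0).isProbabilityMeasure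
  have hdefect : semicircleDefect (2 * c 0) z (stieltjes μ z) = 0 :=
    tendsto_nhds_unique
      (tendsto_integral_comp_of_tendstoInMeasure_const
        (fun N => hX.aestronglyMeasurable_comp_realResolvent hz.ne' (continuous_shiftTrace 0))
        (fun N ω => norm_lagTrace_le X N hz ω 0) (hconv.tendstoInMeasure_lagTrace_zero hz)
        (continuous_semicircleDefect _ z))
      (hX.tendsto_integral_semicircleDefect hc hc0 hcmax hz hzc)
  have hs : conj (stieltjes μ z) ≠ 0 := by simpa using stieltjes_ne_zero μ hz
  linear_combination -(mul_eq_zero.1 hdefect).resolve_left hs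

theorem StatGauss.eq_WSL_of_hasDiagonalCovariance [IsProbabilityMeasure μ] (hX : StatGauss P X)
    (hc : HasDiagonalCovariance P X c) (hc0 : Tendsto c cofinite (nhds 0)) (hcpos : 0 < c 0)
    (hcmax : ∀ v, |c v| ≤ c 0) (hconv : ESDTendstoInProb P (scaledW X) μ) :
    μ = WSL (2 * c 0) := by
  have := isFiniteMeasure_WSL (2 * c 0)
  have hsq := Real.sq_sqrt hcpos.le
  have hsqrt := Real.sqrt_pos.2 hcpos
  set η := 2 * √(c 0) + 1
  have hη : 0 < η := by positivity
  refine ext_of_stieltjes hη fun z hz => ?_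
  have hzpos : 0 < z.im := hz ▸ hη
  have hzc : 4 * c 0 * z.im⁻¹ < z.im := by
    rw [hz, ← div_eq_mul_inv, div_lt_iff₀ hη]
    nlinarith
  refine (stieltjes_WSL (by positivity) hzpos.ne'
    (hX.semicircle_equation_stieltjes hc hc0 hcmax hconv hzpos hzc) ?_).symm
  have hγη : √(2 * c 0) < η := (Real.sqrt_lt' hη).2 (by nlinarith)
  calc ‖√(2 * c 0) * stieltjes μ z‖ = √(2 * c 0) * ‖stieltjes μ z‖ := by
        simp [abs_of_nonneg (Real.sqrt_nonneg _)]
    _ ≤ √(2 * c 0) * η⁻¹ := by gcongr; exact hz ▸ norm_stieltjes_le μ hzpos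
    _ < 1 := by rwa [← div_eq_mul_inv, div_lt_one hη]

end SpectralLimit

section SpectralDensity

variable {h : ℝ → ℝ}

/-- The Fourier coefficient `∫ e^{iuz} h(z) dz` over `(-π, π]`, without normalization. -/
def circleFourier (h : ℝ → ℝ) (u : ℤ) : ℂ :=
  ∫ z in (-π)..π, Complex.exp (Complex.I * ((u * z : ℝ) : ℂ)) * (h z : ℂ)

theorem circleFourier_zero (h : ℝ → ℝ) : circleFourier h 0 = ((∫ z in (-π)..π, h z : ℝ) : ℂ) := by
  simp [circleFourier, intervalIntegral.integral_ofReal]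

theorem norm_circleFourier_le (hpos : ∀ z, 0 ≤ h z) (u : ℤ) :
    ‖circleFourier h u‖ ≤ ∫ z in (-π)..π, h z := by
  refine (intervalIntegral.norm_integral_le_integral_norm (by linarith [pi_pos])).trans_eq ?_
  refine intervalIntegral.integral_congr fun z _ => ?_
  simp [Complex.norm_exp, abs_of_nonneg (hpos z)]

theorem tendsto_circleFourier_cofinite (h : ℝ → ℝ) :
    Tendsto (circleFourier h) cofinite (nhds 0) := by
  have hne : -(2 * π)⁻¹ ≠ 0 := neg_ne_zero.2 (inv_ne_zero two_pi_pos.ne')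
  have hscale : Tendsto (fun u : ℤ => (u : ℝ) * -(2 * π)⁻¹) cofinite (cocompact ℝ) :=
    (Homeomorph.mulRight₀ _ hne).isClosedEmbedding.tendsto_cocompact.comp
      Int.tendsto_coe_cofinite
  refine ((Real.tendsto_integral_exp_smul_cocompact
    ((Set.Ioc (-π) π).indicator fun z => (h z : ℂ))).comp hscale).congr fun u => ?_
  rw [circleFourier, intervalIntegral.integral_of_le (by linarith [pi_pos]),
    ← integral_indicator measurableSet_Ioc]
  refine integral_congr_ae (ae_of_all _ fun z => ?_)
  by_cases hz : z ∈ Set.Ioc (-π) π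
  · simp only [Set.indicator_of_mem hz, Circle.smul_def, Real.fourierChar_apply, smul_eq_mul]
    congr 2
    have := pi_ne_zero
    push_cast
    field_simp
  · simp [Set.indicator_of_notMem hz]

theorem integral_exp_I_mul_int_mul (n : ℤ) :
    ∫ x in (-π)..π, Complex.exp (Complex.I * ((n * x : ℝ) : ℂ)) =
      if n = 0 then (2 * π : ℂ) else 0 := by
  split_ifs with hn
  · simp [hn, two_mul]
  · have hne : Complex.I * n ≠ 0 := mul_ne_zero Complex.I_ne_zero (by exact_mod_cast hn)
    simp only [Complex.ofReal_mul, Complex.ofReal_intCast, ← mul_assoc]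
    rw [integral_exp_mul_complex hne, div_eq_zero_iff, sub_eq_zero,
      Complex.exp_eq_exp_iff_exists_int]
    refine Or.inl ⟨n, ?_⟩
    push_cast
    ring

theorem periodic_exp_I_mul_int_mul (n : ℤ) :
    Function.Periodic (fun x : ℝ => Complex.exp (Complex.I * ((n * x : ℝ) : ℂ))) (2 * π) := by
  intro x
  rw [Complex.exp_eq_exp_iff_exists_int]
  refine ⟨n, ?_⟩
  push_cast
  ring

theorem integrableOn_specBox_comp_add (hper : Function.Periodic h (2 * π))
    (hint : IntervalIntegrable h volume (-π) π) :
    IntegrableOn (fun q : ℝ × ℝ => h (q.1 + q.2)) specBox := by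
  have hwide : IntegrableOn h (Set.Ioc (-(2 * π)) (2 * π)) := by
    rw [← intervalIntegrable_iff_integrableOn_Ioc_of_le (by linarith [pi_pos])]
    exact hper.intervalIntegrable two_pi_pos.ne' (t := -π) (by ring_nf at hint ⊢; exact hint) _ _
  have hstrip : IntegrableOn (fun q : ℝ × ℝ => h q.2)
      (Set.Ioc (-π) π ×ˢ Set.Ioc (-(2 * π)) (2 * π)) := by
    rw [IntegrableOn, Measure.volume_eq_prod, ← Measure.prod_restrict]
    exact hwide.comp_snd _
  have hshear := (measurePreserving_prod_add (volume : Measure ℝ) volume).restrict_preimage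
    ((measurableSet_Ioc (a := -π) (b := π)).prod
      (measurableSet_Ioc (a := -(2 * π)) (b := 2 * π)))
  refine IntegrableOn.mono_set (hshear.integrable_comp_of_integrable hstrip) fun q hq => ?_
  obtain ⟨⟨h₁, h₂⟩, h₃, h₄⟩ := hq
  exact ⟨⟨h₁, h₂⟩, by linarith, by linarith⟩

theorem integral_specBox_exp_mul_comp_add (hper : Function.Periodic h (2 * π))
    (hint : IntervalIntegrable h volume (-π) π) (u v : ℤ) :
    ∫ q in specBox, Complex.exp (Complex.I * ((u * q.1 + v * q.2 : ℝ) : ℂ)) *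
        (((2 * π)⁻¹ * h (q.1 + q.2) : ℝ) : ℂ) = if u = v then circleFourier h u else 0 := by
  have hle : -π ≤ π := by linarith [pi_pos]
  set φ : ℝ → ℂ := fun z => Complex.exp (Complex.I * ((v * z : ℝ) : ℂ)) * (h z : ℂ)
  have hφ : Function.Periodic φ (2 * π) :=
    (periodic_exp_I_mul_int_mul v).mul fun z => congrArg Complex.ofReal (hper z)
  have hfactor (x y : ℝ) : Complex.exp (Complex.I * ((u * x + v * y : ℝ) : ℂ)) *
      (((2 * π)⁻¹ * h (x + y) : ℝ) : ℂ) =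
        Complex.exp (Complex.I * (((u - v : ℤ) * x : ℝ) : ℂ)) * (2 * π : ℂ)⁻¹ * φ (x + y) := by
    rw [show Complex.I * ((u * x + v * y : ℝ) : ℂ) = Complex.I * (((u - v : ℤ) * x : ℝ) : ℂ) +
      Complex.I * ((v * (x + y) : ℝ) : ℂ) by push_cast; ring, Complex.exp_add]
    simp only [φ]
    push_cast
    ring
  have hinner (x : ℝ) : ∫ y in (-π)..π, φ (x + y) = circleFourier h v := by
    rw [intervalIntegral.integral_comp_add_left φ x, circleFourier]
    convert hφ.intervalIntegral_add_eq (x + -π) (-π) using 2 <;> ring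
  have hintegrable : IntegrableOn (fun q : ℝ × ℝ =>
      Complex.exp (Complex.I * ((u * q.1 + v * q.2 : ℝ) : ℂ)) *
        (((2 * π)⁻¹ * h (q.1 + q.2) : ℝ) : ℂ)) specBox :=
    (((integrableOn_specBox_comp_add hper hint).const_mul _).ofReal).bdd_mul (c := 1)
      (Continuous.aestronglyMeasurable (by fun_prop))
      (ae_of_all _ fun q => by simp [Complex.norm_exp])
  rw [specBox, Measure.volume_eq_prod, setIntegral_prod _ hintegrable]
  simp only [hfactor, ← intervalIntegral.integral_of_le hle, intervalIntegral.integral_const_mul,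
    hinner, intervalIntegral.integral_mul_const, integral_exp_I_mul_int_mul, sub_eq_zero]
  split_ifs with huv
  · rw [huv, mul_inv_cancel₀ (by simp [pi_ne_zero]), one_mul]
  · rw [zero_mul, zero_mul]

variable {Ω : Type*} [MeasurableSpace Ω] {P : Measure Ω} {X : ℤ → ℤ → Ω → ℝ} {μ : Measure ℝ}

theorem StatGauss.hasDiagonalCovariance (hX : StatGauss P X)
    (hper : Function.Periodic h (2 * π)) (hint : IntervalIntegrable h volume (-π) π)
    (hXh : HasSpecDensity P X fun q => (2 * π)⁻¹ * h (q.1 + q.2)) :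
    HasDiagonalCovariance P X fun u => (circleFourier h u).re := by
  intro j k l m
  have hstat := hX.stat j k (l - j) (m - k)
  rw [add_sub_cancel, add_sub_cancel] at hstat
  have hcov := (integral_specBox_exp_mul_comp_add hper hint (l - j) (m - k)).symm.trans
    (hXh (l - j) (m - k))
  rw [hstat, ← Complex.ofReal_re (∫ ω, X 0 0 ω * X (l - j) (m - k) ω ∂P), ← hcov,
    apply_ite Complex.re, Complex.zero_re]

theorem StatGauss.eq_WSL_of_hasSpecDensity_comp_add [IsProbabilityMeasure μ] (hX : StatGauss P X)
    (hper : Function.Periodic h (2 * π)) (hint : IntervalIntegrable h volume (-π) π)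
    (hpos : ∀ z, 0 ≤ h z) (hXh : HasSpecDensity P X fun q => (2 * π)⁻¹ * h (q.1 + q.2))
    (hconv : ESDTendstoInProb P (scaledW X) μ) :
    μ = WSL (2 * ∫ z in (-π)..π, h z) := by
  have hc := hX.hasDiagonalCovariance hper hint hXh
  have hc_zero : (circleFourier h 0).re = ∫ z in (-π)..π, h z := by
    rw [circleFourier_zero, Complex.ofReal_re]
  have hc_pos : 0 < (circleFourier h 0).re := by
    have hvar := hc 0 0 0 0
    simp only [sub_self, if_true, ← sq] at hvar
    exact hvar ▸ hX.var_pos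
  have hc_lim : Tendsto (fun u => (circleFourier h u).re) cofinite (nhds 0) :=
    (Complex.continuous_re.tendsto 0).comp (tendsto_circleFourier_cofinite h)
  have hc_le (u : ℤ) : |(circleFourier h u).re| ≤ (circleFourier h 0).re :=
    ((Complex.abs_re_le_norm _).trans (norm_circleFourier_le hpos u)).trans_eq hc_zero.symm
  simpa only [hc_zero] using hX.eq_WSL_of_hasDiagonalCovariance hc hc_lim hc_pos hc_le hconv

end SpectralDensity

section InverseSqrtSingularity

theorem intervalIntegrable_abs_rpow {r : ℝ} (hr : -1 < r) (a b : ℝ) :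
    IntervalIntegrable (fun z : ℝ => |z| ^ r) volume a b := by
  refine intervalIntegrable_of_even (fun z => by rw [abs_neg]) fun x hx => ?_
  refine (intervalIntegral.intervalIntegrable_rpow' hr).congr fun z hz => ?_
  rw [Set.uIoc_of_le hx.le] at hz
  simp only [abs_of_pos hz.1]

theorem integral_abs_rpow {r a : ℝ} (hr : -1 < r) (ha : 0 ≤ a) :
    ∫ z in (-a)..a, |z| ^ r = 2 * (a ^ (r + 1) / (r + 1)) := by
  have hpos : ∫ z in (0)..a, |z| ^ r = a ^ (r + 1) / (r + 1) := by
    have habs : ∫ z in (0)..a, |z| ^ r = ∫ z in (0)..a, z ^ r := by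
      refine intervalIntegral.integral_congr fun z hz => ?_
      rw [Set.uIcc_of_le ha] at hz
      simp only [abs_of_nonneg hz.1]
    rw [habs, integral_rpow (Or.inl hr), zero_rpow (by linarith), sub_zero]
  have hneg : ∫ z in (-a)..0, |z| ^ r = ∫ z in (0)..a, |z| ^ r := by
    simpa only [abs_neg, neg_zero] using
      (intervalIntegral.integral_comp_neg (a := 0) (b := a) fun z : ℝ => |z| ^ r).symm
  rw [← intervalIntegral.integral_add_adjacent_intervals
    (intervalIntegrable_abs_rpow hr _ 0) (intervalIntegrable_abs_rpow hr 0 _), hneg, hpos]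
  ring

theorem integral_abs_rpow_neg_half :
    ∫ z in (-π)..π, |z| ^ (-(1 / 2 : ℝ)) = 4 * √π := by
  rw [integral_abs_rpow (by norm_num) pi_pos.le, Real.sqrt_eq_rpow]
  norm_num
  ring

theorem lintegral_Ioc_inv_eq_top {b : ℝ} (hb : 0 < b) :
    ∫⁻ t in Set.Ioc 0 b, ENNReal.ofReal t⁻¹ = ⊤ := by
  by_contra hfin
  have hnonneg : 0 ≤ᵐ[volume.restrict (Set.Ioc 0 b)] fun t : ℝ => t⁻¹ :=
    (ae_restrict_mem measurableSet_Ioc).mono fun t ht => inv_nonneg.2 ht.1.le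
  have hint : IntervalIntegrable (fun t : ℝ => t⁻¹) volume 0 b := by
    rw [intervalIntegrable_iff_integrableOn_Ioc_of_le hb.le]
    exact (lintegral_ofReal_ne_top_iff_integrable
      measurable_inv.aestronglyMeasurable hnonneg).1 hfin
  rcases intervalIntegrable_inv_iff.1 hint with h | h
  · exact hb.ne h
  · exact h Set.left_mem_uIcc

theorem setLIntegral_Ioc_le_lintegral_specBox_comp_add (ψ : ℝ → ENNReal) :
    ∫⁻ t in Set.Ioc 0 1, ψ t ≤ ∫⁻ q in specBox, ψ (q.1 + q.2) := by
  have : IsProbabilityMeasure (volume.restrict (Set.Ioc (0 : ℝ) 1)) := ⟨by simp⟩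
  set S := Set.Ioc (0 : ℝ) 1 ×ˢ Set.Ioc (0 : ℝ) 1
  have hshear := (measurePreserving_prod_add (volume : Measure ℝ) volume).restrict_preimage
    ((measurableSet_Ioc (a := (0 : ℝ)) (b := 1)).prod (measurableSet_Ioc (a := (0 : ℝ)) (b := 1)))
  rw [← Measure.prod_restrict] at hshear
  have hsum := measurePreserving_snd.comp hshear
  have hsub : (fun q : ℝ × ℝ => (q.1, q.1 + q.2)) ⁻¹' S ⊆ specBox := by
    rintro q ⟨⟨h₁, h₂⟩, h₃, h₄⟩
    exact ⟨⟨by linarith [pi_pos], by linarith [pi_gt_three]⟩,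
      by linarith [pi_gt_three], by linarith [pi_gt_three]⟩
  rw [← hsum.map_eq]
  exact (lintegral_map_le ψ _).trans (lintegral_mono_set hsub)

theorem lintegral_specBox_sq_comp_add_eq_top {h : ℝ → ℝ}
    (hval : ∀ t ∈ Set.Ioc (0 : ℝ) 1, h t = t ^ (-(1 / 2 : ℝ))) :
    ∫⁻ q in specBox, ENNReal.ofReal ((2 * π)⁻¹ * h (q.1 + q.2)) ^ 2 = ⊤ := by
  have hsq : ∫⁻ t in Set.Ioc (0 : ℝ) 1, ENNReal.ofReal ((2 * π)⁻¹ * h t) ^ 2 =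
      ∫⁻ t in Set.Ioc (0 : ℝ) 1, ENNReal.ofReal ((2 * π)⁻¹ ^ 2) * ENNReal.ofReal t⁻¹ := by
    refine setLIntegral_congr_fun measurableSet_Ioc fun t ht => ?_
    have ht_pos : 0 < t := ht.1
    have ht_sq : (t ^ (-(1 / 2 : ℝ))) ^ 2 = t⁻¹ := by
      rw [← rpow_mul_natCast ht_pos.le, ← rpow_neg_one]
      norm_num
    rw [hval t ht, ← ENNReal.ofReal_pow (by positivity), mul_pow, ht_sq,
      ENNReal.ofReal_mul (by positivity)]
  refine top_unique ?_
  calc (⊤ : ENNReal) = ENNReal.ofReal ((2 * π)⁻¹ ^ 2) * ⊤ :=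
        (ENNReal.mul_top (ENNReal.ofReal_pos.2 (by positivity)).ne').symm
    _ = ∫⁻ t in Set.Ioc (0 : ℝ) 1, ENNReal.ofReal ((2 * π)⁻¹ * h t) ^ 2 := by
        rw [hsq, lintegral_const_mul _ (by fun_prop), lintegral_Ioc_inv_eq_top one_pos]
    _ ≤ _ := setLIntegral_Ioc_le_lintegral_specBox_comp_add
        fun t => ENNReal.ofReal ((2 * π)⁻¹ * h t) ^ 2

end InverseSqrtSingularity

/-- **Example 4.3.** For the density `f(x,y) = (2π)⁻¹ h(x+y)` with `h`
`2π`-periodic and `h(z) = |z|^{-1/2}` on `(-π,π] \ {0}`, the limiting spectral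
distribution is `WSL(8√π)`, while `‖f‖₂ = ∞`. -/
theorem statement17 {Ω : Type} [MeasurableSpace Ω] (P : Measure Ω)
    [IsProbabilityMeasure P] (X : ℤ → ℤ → Ω → ℝ) (h : ℝ → ℝ)
    (hper : ∀ z : ℝ, h (z + 2 * π) = h z)
    (hval : ∀ z ∈ Set.Ioc (-π) π, z ≠ 0 → h z = |z| ^ (-(1 / 2 : ℝ)))
    (hh_nonneg : ∀ z, 0 ≤ h z)
    (hX : StatGauss P X)
    (hXf : HasSpecDensity P X (fun q => (2 * π)⁻¹ * h (q.1 + q.2)))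
    (μf : Measure ℝ) (hμf : IsProbabilityMeasure μf)
    (hconv : ESDTendstoInProb P (scaledW X) μf) :
    μf = WSL (8 * Real.sqrt π) ∧
    ∫⁻ q in specBox,
      (ENNReal.ofReal ((2 * π)⁻¹ * h (q.1 + q.2))) ^ 2 = ⊤ := by
  have hle : -π ≤ π := by linarith [pi_pos]
  have hae : h =ᵐ[volume.restrict (Set.uIoc (-π) π)] fun z => |z| ^ (-(1 / 2 : ℝ)) := by
    rw [Set.uIoc_of_le hle]
    filter_upwards [ae_restrict_mem measurableSet_Ioc, ae_restrict_of_ae (volume.ae_ne 0)]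
      with z hz hz0 using hval z hz hz0
  have hint : IntervalIntegrable h volume (-π) π :=
    (intervalIntegrable_abs_rpow (by norm_num) _ _).congr_ae hae.symm
  constructor
  · rw [hX.eq_WSL_of_hasSpecDensity_comp_add hper hint hh_nonneg hXf hconv,
      intervalIntegral.integral_congr_ae_restrict hae, integral_abs_rpow_neg_half]
    congr 1
    ring
  · refine lintegral_specBox_sq_comp_add_eq_top fun t ht => ?_
    rw [hval t ⟨by linarith [pi_pos, ht.1], by linarith [pi_gt_three, ht.2]⟩ ht.1.ne',
      abs_of_pos ht.1]

end
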